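/- Fix integers k1 ≥ 2, k2 ≥ 2 and set k := min{k1,k2}. Fix reals ε > 0 and C1 > max{k1,k2} + ε. Then there exists a constant C > 0 such that for all positive integers N and M with (max{k1,k2} + ε)·N ≤ M ≤ C1·N, the number of (k1,k2)-dicores on vertex set {1,…,N} with M edges that are NOT k-strongly connected is at most C · N^{-(k-1)} times the total number of (k1,k2)-dicores on {1,…,N} with M edges. Equivalently, a uniformly random (k1,k2)-dicore with N vertices and M edges is k-strongly connected with probability 1 − O(N^{-(k-1)}). -/

import Mathlib

/-- A `(k1,k2)`-dicore on vertex set `Fin N` with `M` edges: a simple digraph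
(edges are ordered pairs of distinct vertices; a `Finset` has no repeated edges)
with exactly `M` edges, minimum in-degree `≥ k1` and minimum out-degree `≥ k2`. -/
def IsDicore (k1 k2 N M : ℕ) (E : Finset (Fin N × Fin N)) : Prop :=
  E.card = M ∧ (∀ e ∈ E, e.1 ≠ e.2) ∧
    ∀ v : Fin N,
      k1 ≤ (E.filter (fun e => e.2 = v)).card ∧
      k2 ≤ (E.filter (fun e => e.1 = v)).card

/-- A digraph on `N` vertices is `k`-strongly connected if `N > k` and, for every
set `T` of fewer than `k` vertices, every ordered pair of remaining vertices is
joined by a directed path avoiding `T`. -/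
def KStronglyConnected {N : ℕ} (k : ℕ) (E : Finset (Fin N × Fin N)) : Prop :=
  k < N ∧ ∀ T : Finset (Fin N), T.card < k →
    ∀ u v : Fin N, u ∉ T → v ∉ T →
      Relation.ReflTransGen (fun a b => a ∉ T ∧ b ∉ T ∧ (a, b) ∈ E) u v

/-! Dicores are compared by switchings, which move the tail of an edge or exchange the tails of two
edges and so preserve the number of edges and the degree conditions. Counting the switchings out of
a bad class of dicores and into each dicore bounds the proportion of the class. Moving tails shows
that few edges meet a small vertex set. Exchanging edges across a small set `S` shows that it rarely
receives edges from fewer than `k` outside vertices, so a failure of `k`-strong connectivity leaves,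
after the deletion of fewer than `k` vertices, a cut into two linearly large sides without edges
from one to the other. To exclude such a cut for all possible sides at once, mark a random set of
edges: the sides contain cores that are determined by the unmarked edges, and exchanges among the
marked edges show that they avoid the edges from one core to the other with exponentially small
probability. -/

namespace Dicore

open Finset

lemma card_mul_le_card_mul_of_moves {α β γ δ : Type*} {X : Finset α} {Y : Finset γ}
    (moves : α → Finset β) (undoes : γ → Finset δ) (move : α → β → γ) (label : α → β → δ)
    (undo : γ → δ → α × β) {a b : ℝ}
    (hmoves : ∀ x ∈ X, a ≤ #(moves x)) (hundoes : ∀ y ∈ Y, (#(undoes y) : ℝ) ≤ b)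
    (hmem : ∀ x ∈ X, ∀ m ∈ moves x, move x m ∈ Y ∧ label x m ∈ undoes (move x m))
    (hundo : ∀ x ∈ X, ∀ m ∈ moves x, undo (move x m) (label x m) = (x, m)) :
    (#X : ℝ) * a ≤ #Y * b := by
  have hcard : #(X.sigma fun x => moves x) ≤ #(Y.sigma fun y => undoes y) := by
    refine card_le_card_of_injOn (fun p => ⟨move p.1 p.2, label p.1 p.2⟩) ?_ ?_
    · rintro ⟨x, m⟩ hp
      obtain ⟨hx, hm⟩ := mem_sigma.1 hp
      exact mem_sigma.2 (hmem x hx m hm)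
    · rintro ⟨x, m⟩ hp ⟨x', m'⟩ hp' h
      obtain ⟨hx, hm⟩ := mem_sigma.1 hp
      obtain ⟨hx', hm'⟩ := mem_sigma.1 hp'
      obtain ⟨hmove, hlabel⟩ := Sigma.mk.inj_iff.1 h
      have heq := hundo x hx m hm
      dsimp only at hmove hlabel
      rw [hmove, eq_of_heq hlabel, hundo x' hx' m' hm'] at heq
      obtain ⟨rfl, rfl⟩ := Prod.mk.inj heq
      rfl
  calc (#X : ℝ) * a = ∑ _x ∈ X, a := by rw [sum_const, nsmul_eq_mul]
    _ ≤ ∑ x ∈ X, (#(moves x) : ℝ) := sum_le_sum hmoves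
    _ ≤ ∑ y ∈ Y, (#(undoes y) : ℝ) := by simp only [card_sigma] at hcard; exact_mod_cast hcard
    _ ≤ ∑ _y ∈ Y, b := sum_le_sum hundoes
    _ = #Y * b := by rw [sum_const, nsmul_eq_mul]

/-! ### Degrees of vertex sets and reversal -/

section Digraph

variable {V : Type*} {E : Finset (V × V)}

/-- The digraph with all edges reversed; it turns statements about heads into statements about
tails. -/
def rev (E : Finset (V × V)) : Finset (V × V) := E.map (Equiv.prodComm V V).toEmbedding

@[simp] lemma mem_rev {e : V × V} : e ∈ rev E ↔ e.swap ∈ E := by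
  simp only [rev, mem_map_equiv, Equiv.prodComm_symm, Equiv.prodComm_apply]

@[simp] lemma rev_rev (E : Finset (V × V)) : rev (rev E) = E := by ext; simp

@[simp] lemma card_rev (E : Finset (V × V)) : #(rev E) = #E := card_map _

lemma rev_mono {R : Finset (V × V)} (h : R ⊆ E) : rev R ⊆ rev E := map_subset_map.2 h

/-- The edges `(u, v)` and `(x, y)` are present and can be exchanged for `(x, v)` and `(u, y)`
without creating repeated edges. -/
structure Exchangeable (E : Finset (V × V)) (u v x y : V) : Prop where
  mem_left : (u, v) ∈ E
  mem_right : (x, y) ∈ E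
  notMem_left : (x, v) ∉ E
  notMem_right : (u, y) ∉ E

namespace Exchangeable

variable {u v x y : V}

lemma tail_ne (h : Exchangeable E u v x y) : u ≠ x := by
  rintro rfl
  exact h.notMem_left h.mem_left

lemma head_ne (h : Exchangeable E u v x y) : v ≠ y := by
  rintro rfl
  exact h.notMem_left h.mem_right

lemma subset {R : Finset (V × V)} (h : Exchangeable E u v x y) (hR : R ⊆ E) (huv : (u, v) ∈ R)
    (hxy : (x, y) ∈ R) : Exchangeable R u v x y :=
  ⟨huv, hxy, notMem_mono hR h.notMem_left, notMem_mono hR h.notMem_right⟩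

end Exchangeable

variable [DecidableEq V]

lemma rev_sdiff (E R : Finset (V × V)) : rev (E \ R) = rev E \ rev R := map_sdiff _ _

/-- The out-degree of a vertex set: the number of edges with tail in `Z`. The out-degree of a
vertex `v` is `outDeg E {v}`. -/
def outDeg (E : Finset (V × V)) (Z : Finset V) : ℕ := #{e ∈ E | e.1 ∈ Z}

/-- The in-degree of a vertex set: the number of edges with head in `Z`. The in-degree of a
vertex `v` is `inDeg E {v}`. -/
def inDeg (E : Finset (V × V)) (Z : Finset V) : ℕ := #{e ∈ E | e.2 ∈ Z}

lemma outDeg_le_card (E : Finset (V × V)) (Z : Finset V) : outDeg E Z ≤ #E := card_filter_le _ _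

lemma outDeg_eq_sum (E : Finset (V × V)) (Z : Finset V) :
    outDeg E Z = ∑ v ∈ Z, outDeg E {v} := by
  simp only [outDeg, mem_singleton]
  exact (sum_card_fiberwise_eq_card_filter E Z Prod.fst).symm

lemma inDeg_eq_sum (E : Finset (V × V)) (Z : Finset V) : inDeg E Z = ∑ v ∈ Z, inDeg E {v} := by
  simp only [inDeg, mem_singleton]
  exact (sum_card_fiberwise_eq_card_filter E Z Prod.snd).symm

lemma outDeg_le_mul_card {Z : Finset V} {k : ℕ} (h : ∀ v ∈ Z, outDeg E {v} ≤ k) :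
    outDeg E Z ≤ k * #Z := by
  rw [outDeg_eq_sum, mul_comm]
  exact sum_le_card_nsmul Z _ k h

lemma mul_card_le_inDeg {Z : Finset V} {k : ℕ} (h : ∀ v ∈ Z, k ≤ inDeg E {v}) :
    k * #Z ≤ inDeg E Z := by
  rw [inDeg_eq_sum, mul_comm]
  exact card_nsmul_le_sum Z _ k h

lemma card_filter_lt_two_mul_inDeg_mul_le [Fintype V] (E : Finset (V × V)) (n : ℕ) :
    #{y | n < 2 * inDeg E {y}} * n ≤ 2 * #E :=
  calc #{y | n < 2 * inDeg E {y}} * n ≤ ∑ y with n < 2 * inDeg E {y}, 2 * inDeg E {y} :=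
        card_nsmul_le_sum _ _ _ fun y hy => (mem_filter.1 hy).2.le
    _ ≤ ∑ y, 2 * inDeg E {y} := sum_le_univ_sum_of_nonneg fun _ => Nat.zero_le _
    _ = 2 * #E := by rw [← mul_sum, ← inDeg_eq_sum]; simp [inDeg]

@[simp] lemma inDeg_rev (E : Finset (V × V)) (Z : Finset V) : inDeg (rev E) Z = outDeg E Z := by
  rw [inDeg, rev, filter_map, card_map]
  rfl

@[simp] lemma outDeg_rev (E : Finset (V × V)) (Z : Finset V) : outDeg (rev E) Z = inDeg E Z := by
  rw [← inDeg_rev, rev_rev]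

/-! ### Replacing and exchanging edges -/

/-- The digraph obtained from `E` by replacing the edge `e` by the pair `f`. -/
def replace (E : Finset (V × V)) (e f : V × V) : Finset (V × V) := insert f (E.erase e)

lemma mem_replace {e f g : V × V} : g ∈ replace E e f ↔ g = f ∨ g ≠ e ∧ g ∈ E := by
  rw [replace, mem_insert, mem_erase]

lemma replace_replace {e f : V × V} (he : e ∈ E) (hf : f ∉ E) :
    replace (replace E e f) f e = E := by
  rw [replace, replace, erase_insert (notMem_mono (erase_subset e E) hf), insert_erase he]

lemma card_replace {e f : V × V} (he : e ∈ E) (hf : f ∉ E) : #(replace E e f) = #E := by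
  rw [replace, card_insert_of_notMem (notMem_mono (erase_subset e E) hf), card_erase_add_one he]

lemma card_filter_replace {e f : V × V} (he : e ∈ E) (hf : f ∉ E) (P : V × V → Prop)
    [DecidablePred P] :
    #{g ∈ replace E e f | P g} + (if P e then 1 else 0) =
      #{g ∈ E | P g} + if P f then 1 else 0 := by
  simp only [card_filter, replace, sum_insert (notMem_mono (erase_subset e E) hf)]
  have := add_sum_erase E (fun g => if P g then 1 else 0) he
  omega

lemma outDeg_replace {u v y : V} (huy : (u, y) ∈ E) (hvy : (v, y) ∉ E) (Z : Finset V) :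
    outDeg (replace E (u, y) (v, y)) Z + (if u ∈ Z then 1 else 0) =
      outDeg E Z + if v ∈ Z then 1 else 0 :=
  card_filter_replace huy hvy fun e => e.1 ∈ Z

lemma inDeg_replace {u v y : V} (huy : (u, y) ∈ E) (hvy : (v, y) ∉ E) (Z : Finset V) :
    inDeg (replace E (u, y) (v, y)) Z = inDeg E Z :=
  add_right_cancel (card_filter_replace huy hvy fun e => e.2 ∈ Z)

/-- The digraph obtained from `E` by replacing the edges `(u, v)` and `(x, y)` by `(x, v)` and
`(u, y)`, which preserves all degrees. -/
def exchange (E : Finset (V × V)) (u v x y : V) : Finset (V × V) :=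
  replace (replace E (u, v) (x, v)) (x, y) (u, y)

namespace Exchangeable

variable {u v x y : V}

lemma mem_replace_left (h : Exchangeable E u v x y) : (x, y) ∈ replace E (u, v) (x, v) :=
  mem_replace.2 (Or.inr ⟨by simp [h.head_ne.symm], h.mem_right⟩)

lemma notMem_replace_left (h : Exchangeable E u v x y) : (u, y) ∉ replace E (u, v) (x, v) := by
  simp [mem_replace, h.head_ne.symm, h.notMem_right]

lemma mem_exchange (h : Exchangeable E u v x y) {e : V × V} :
    e ∈ exchange E u v x y ↔ e = (x, v) ∨ e = (u, y) ∨ e ∈ E ∧ e ≠ (u, v) ∧ e ≠ (x, y) := by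
  have hne : (x, v) ≠ (x, y) := by simp [h.head_ne]
  simp only [exchange, mem_replace]
  grind

lemma symm (h : Exchangeable E u v x y) : Exchangeable (exchange E u v x y) x v u y := by
  have hu := h.tail_ne
  have hv := h.head_ne
  constructor <;> simp [h.mem_exchange, hu, hv, hu.symm, hv.symm]

lemma exchange_exchange (h : Exchangeable E u v x y) :
    exchange (exchange E u v x y) x v u y = E := by
  ext e
  rw [h.symm.mem_exchange, h.mem_exchange]
  grind [h.mem_left, h.mem_right, h.notMem_left, h.notMem_right]

lemma card_exchange (h : Exchangeable E u v x y) : #(exchange E u v x y) = #E := by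
  rw [exchange, card_replace h.mem_replace_left h.notMem_replace_left,
    card_replace h.mem_left h.notMem_left]

lemma card_filter_exchange (h : Exchangeable E u v x y) (P : V × V → Prop) [DecidablePred P] :
    #{e ∈ exchange E u v x y | P e} + ((if P (u, v) then 1 else 0) + if P (x, y) then 1 else 0) =
      #{e ∈ E | P e} + ((if P (x, v) then 1 else 0) + if P (u, y) then 1 else 0) := by
  have hleft := card_filter_replace h.mem_left h.notMem_left P
  have hright := card_filter_replace h.mem_replace_left h.notMem_replace_left P
  rw [exchange]
  lia

lemma exchange_subset_exchange {R : Finset (V × V)} (h : Exchangeable E u v x y) (hR : R ⊆ E)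
    (huv : (u, v) ∈ R) (hxy : (x, y) ∈ R) : exchange R u v x y ⊆ exchange E u v x y := by
  intro e
  rw [(h.subset hR huv hxy).mem_exchange, h.mem_exchange]
  exact Or.imp_right (Or.imp_right (And.imp_left (@hR e)))

lemma exchange_sdiff_exchange {R : Finset (V × V)} (h : Exchangeable E u v x y) (hR : R ⊆ E)
    (huv : (u, v) ∈ R) (hxy : (x, y) ∈ R) :
    exchange E u v x y \ exchange R u v x y = E \ R := by
  ext e
  rw [mem_sdiff, mem_sdiff, (h.subset hR huv hxy).mem_exchange, h.mem_exchange]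
  grind [h.notMem_left, h.notMem_right]

lemma inDeg_exchange (h : Exchangeable E u v x y) (Z : Finset V) :
    inDeg (exchange E u v x y) Z = inDeg E Z := by
  rw [exchange, inDeg_replace h.mem_replace_left h.notMem_replace_left,
    inDeg_replace h.mem_left h.notMem_left]

lemma outDeg_exchange (h : Exchangeable E u v x y) (Z : Finset V) :
    outDeg (exchange E u v x y) Z = outDeg E Z := by
  have h₁ := outDeg_replace h.mem_left h.notMem_left Z
  have h₂ := outDeg_replace h.mem_replace_left h.notMem_replace_left Z
  rw [exchange]
  omega

end Exchangeable

end Digraph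

/-! ### Dicores -/

open scoped Classical

/-- The finite set of `(k1,k2)`-dicores with `N` vertices and `M` edges. -/
noncomputable def dicores (k1 k2 N M : ℕ) : Finset (Finset (Fin N × Fin N)) :=
  univ.filter (IsDicore k1 k2 N M)

section Dicores

variable {k1 k2 N M : ℕ} {E : Finset (Fin N × Fin N)}

lemma mem_dicores : E ∈ dicores k1 k2 N M ↔ IsDicore k1 k2 N M E := by simp [dicores]

lemma natCard_isDicore (k1 k2 N M : ℕ) :
    Nat.card {E : Finset (Fin N × Fin N) // IsDicore k1 k2 N M E} = #(dicores k1 k2 N M) := by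
  rw [Nat.card_eq_fintype_card, Fintype.card_subtype]
  rfl

lemma natCard_isDicore_and (k1 k2 N M : ℕ) (P : Finset (Fin N × Fin N) → Prop) :
    Nat.card {E : Finset (Fin N × Fin N) // IsDicore k1 k2 N M E ∧ P E} =
      #{E ∈ dicores k1 k2 N M | P E} := by
  rw [Nat.card_eq_fintype_card, Fintype.card_subtype, dicores, filter_filter]

lemma isDicore_iff : IsDicore k1 k2 N M E ↔
    #E = M ∧ (∀ e ∈ E, e.1 ≠ e.2) ∧ ∀ v, k1 ≤ inDeg E {v} ∧ k2 ≤ outDeg E {v} := by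
  simp only [IsDicore, inDeg, outDeg, mem_singleton]

lemma _root_.IsDicore.rev (h : IsDicore k1 k2 N M E) : IsDicore k2 k1 N M (rev E) := by
  rw [isDicore_iff] at h ⊢
  simp only [card_rev, mem_rev, inDeg_rev, outDeg_rev]
  exact ⟨h.1, fun e he => (h.2.1 _ he).symm, fun v => (h.2.2 v).symm⟩

lemma _root_.IsDicore.exchange {u v x y : Fin N} (hE : IsDicore k1 k2 N M E)
    (h : Exchangeable E u v x y) (hxv : x ≠ v) (huy : u ≠ y) :
    IsDicore k1 k2 N M (exchange E u v x y) := by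
  rw [isDicore_iff] at hE ⊢
  simp only [h.card_exchange, h.inDeg_exchange, h.outDeg_exchange]
  refine ⟨hE.1, fun e he => ?_, hE.2.2⟩
  obtain rfl | rfl | he := h.mem_exchange.1 he
  exacts [hxv, huy, hE.2.1 e he.1]

lemma _root_.IsDicore.replace_tail {u v y : Fin N} (hE : IsDicore k1 k2 N M E) (huy : (u, y) ∈ E)
    (hvy : (v, y) ∉ E) (hne : v ≠ y) (hu : k2 < outDeg E {u}) :
    IsDicore k1 k2 N M (replace E (u, y) (v, y)) := by
  rw [isDicore_iff] at hE ⊢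
  simp only [card_replace huy hvy, inDeg_replace huy hvy]
  refine ⟨hE.1, fun e he => ?_, fun w => ⟨(hE.2.2 w).1, ?_⟩⟩
  · obtain rfl | ⟨-, he⟩ := mem_replace.1 he
    exacts [hne, hE.2.1 e he]
  · have hw := outDeg_replace huy hvy {w}
    simp only [mem_singleton] at hw
    obtain rfl | hne := eq_or_ne u w
    · simp only [if_true] at hw
      omega
    · have := (hE.2.2 w).2
      simp only [hne, if_false] at hw
      omega

lemma _root_.IsDicore.mul_card_le_inDeg (h : IsDicore k1 k2 N M E) (Z : Finset (Fin N)) :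
    k1 * #Z ≤ inDeg E Z :=
  Dicore.mul_card_le_inDeg fun v _ => ((isDicore_iff.1 h).2.2 v).1

lemma _root_.IsDicore.mul_le (h : IsDicore k1 k2 N M E) : k1 * N ≤ M :=
  calc k1 * N = k1 * #(univ : Finset (Fin N)) := by rw [card_univ, Fintype.card_fin]
    _ ≤ inDeg E univ := h.mul_card_le_inDeg univ
    _ ≤ #E := card_filter_le _ _
    _ = M := h.1

end Dicores

/-! ### Tails of the degree distribution -/

section Tail

variable {k1 k2 c N M : ℕ} {E : Finset (Fin N × Fin N)}

/-- The edges leaving `A` whose tail may be moved: the tail can spare an edge, and the head has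
in-degree at most `N / 2`, so that about half of the vertices can serve as the new tail. -/
def movableEdges (k2 : ℕ) (E : Finset (Fin N × Fin N)) (A : Finset (Fin N)) :
    Finset (Fin N × Fin N) :=
  {e ∈ E | e.1 ∈ A ∧ k2 < outDeg E {e.1} ∧ 2 * inDeg E {e.2} ≤ N}

/-- The vertices outside `A` that can become the tail of a new edge with head `y`. -/
def freeTails (E : Finset (Fin N × Fin N)) (A : Finset (Fin N)) (y : Fin N) : Finset (Fin N) :=
  {x | x ∉ A ∧ x ≠ y ∧ (x, y) ∉ E}

lemma outDeg_le_card_movableEdges_add (hN : 0 < N) (hE : #E ≤ c * N) (A : Finset (Fin N)) :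
    outDeg E A ≤ #(movableEdges k2 E A) + (k2 + 2 * c) * #A := by
  set poorTails : Finset (Fin N) := {v ∈ A | outDeg E {v} ≤ k2}
  set heavyHeads : Finset (Fin N) := {y | N < 2 * inDeg E {y}}
  have hpoor : outDeg E poorTails ≤ k2 * #A :=
    (outDeg_le_mul_card fun v hv => (mem_filter.1 hv).2).trans
      (Nat.mul_le_mul_left _ (card_filter_le _ _))
  have hheavy : #heavyHeads ≤ 2 * c := by
    refine Nat.le_of_mul_le_mul_right ?_ hN
    calc #heavyHeads * N ≤ 2 * #E := card_filter_lt_two_mul_inDeg_mul_le E N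
      _ ≤ 2 * c * N := by linarith
  have hcover : {e ∈ E | e.1 ∈ A} ⊆
      movableEdges k2 E A ∪ {e ∈ E | e.1 ∈ poorTails} ∪ A ×ˢ heavyHeads := fun e he => by
    simp only [movableEdges, poorTails, heavyHeads, mem_union, mem_filter, mem_product, mem_univ,
      true_and] at he ⊢
    grind
  calc outDeg E A ≤ #(movableEdges k2 E A) + outDeg E poorTails + #(A ×ˢ heavyHeads) :=
        (card_le_card hcover).trans <| (card_union_le _ _).trans <|
          Nat.add_le_add_right (card_union_le _ _) _
    _ ≤ #(movableEdges k2 E A) + k2 * #A + #A * (2 * c) := by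
      rw [card_product]
      gcongr
    _ = #(movableEdges k2 E A) + (k2 + 2 * c) * #A := by ring

lemma le_card_freeTails (E : Finset (Fin N × Fin N)) (A : Finset (Fin N)) (y : Fin N) :
    N ≤ #(freeTails E A y) + #A + 1 + inDeg E {y} := by
  have hcover : (univ : Finset (Fin N)) ⊆
      freeTails E A y ∪ A ∪ {y} ∪ {e ∈ E | e.2 ∈ ({y} : Finset (Fin N))}.image Prod.fst := by
    intro x _
    simp only [freeTails, mem_union, mem_filter, mem_univ, true_and, mem_singleton, mem_image,
      Prod.exists, exists_and_right, exists_eq_right]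
    tauto
  calc N = #(univ : Finset (Fin N)) := (card_fin N).symm
    _ ≤ #(freeTails E A y) + #A + #{y} + inDeg E {y} :=
      (card_le_card hcover).trans <| (card_union_le _ _).trans <|
        add_le_add ((card_union_le _ _).trans <| Nat.add_le_add_right (card_union_le _ _) _)
          card_image_le

lemma mul_le_card_sigma_freeTails (hN : 8 ≤ N) (hE : #E ≤ c * N) {A : Finset (Fin N)}
    (hA : 8 * #A ≤ N) :
    ((outDeg E A : ℝ) - (k2 + 2 * c) * #A) * (N / 4) ≤
      #((movableEdges k2 E A).sigma fun e => freeTails E A e.2) := by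
  have hmovable : (outDeg E A : ℝ) ≤ #(movableEdges k2 E A) + (k2 + 2 * c) * #A := by
    exact_mod_cast outDeg_le_card_movableEdges_add (by lia) hE A
  have hfree : ∀ e ∈ movableEdges k2 E A, (N / 4 : ℝ) ≤ #(freeTails E A e.2) := fun e he => by
    have hlight := (mem_filter.1 he).2.2.2
    have := le_card_freeTails E A e.2
    rw [div_le_iff₀ (by norm_num)]
    exact_mod_cast (by lia : N ≤ #(freeTails E A e.2) * 4)
  calc ((outDeg E A : ℝ) - (k2 + 2 * c) * #A) * (N / 4)
    _ ≤ #(movableEdges k2 E A) * (N / 4) := by gcongr; linarith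
    _ = ∑ _e ∈ movableEdges k2 E A, (N / 4 : ℝ) := by rw [sum_const, nsmul_eq_mul]
    _ ≤ #((movableEdges k2 E A).sigma fun e => freeTails E A e.2) := by
      rw [card_sigma, Nat.cast_sum]
      exact sum_le_sum hfree

-- The switching moves the tail of an edge leaving `A` out of `A`; it is undone by naming the new
-- edge and the old tail, for which there are at most `M * #A` choices.
lemma card_outDeg_eq_succ_mul_le (hN : 8 ≤ N) (hM : M ≤ c * N) {A : Finset (Fin N)}
    (hA : 8 * #A ≤ N) (m : ℕ) :
    (#{E ∈ dicores k1 k2 N M | outDeg E A = m + 1} : ℝ) *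
        (((m : ℝ) + 1 - (k2 + 2 * c) * #A) * (N / 4)) ≤
      #{E ∈ dicores k1 k2 N M | outDeg E A = m} * (M * #A) := by
  refine card_mul_le_card_mul_of_moves
    (fun E => (movableEdges k2 E A).sigma fun e => freeTails E A e.2) (fun F => F ×ˢ A)
    (fun E m => replace E m.1 (m.2, m.1.2)) (fun _ m => ((m.2, m.1.2), m.1.1))
    (fun F l => (replace F l.1 (l.2, l.1.2), ⟨(l.2, l.1.2), l.1.1⟩)) ?_ ?_ ?_ ?_
  · intro E hE
    obtain ⟨hE, hEm⟩ := mem_filter.1 hE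
    have h := mul_le_card_sigma_freeTails (k2 := k2) hN ((mem_dicores.1 hE).1.trans_le hM) hA
    rwa [hEm, Nat.cast_succ] at h
  · intro F hF
    rw [card_product, (mem_dicores.1 (mem_filter.1 hF).1).1, Nat.cast_mul]
  · rintro E hE ⟨⟨v, y⟩, x⟩ hm
    obtain ⟨hE, hEm⟩ := mem_filter.1 hE
    simp only [mem_sigma, movableEdges, freeTails, mem_filter, mem_univ, true_and] at hm
    obtain ⟨⟨hvy, hvA, hv, -⟩, hxA, hxy, hxyE⟩ := hm
    have hout := outDeg_replace hvy hxyE A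
    rw [if_pos hvA, if_neg hxA] at hout
    refine ⟨mem_filter.2 ⟨mem_dicores.2 ?_, by lia⟩, mem_product.2 ⟨mem_insert_self _ _, hvA⟩⟩
    exact (mem_dicores.1 hE).replace_tail hvy hxyE hxy hv
  · rintro E - ⟨⟨v, y⟩, x⟩ hm
    simp only [mem_sigma, movableEdges, freeTails, mem_filter] at hm
    simp only [replace_replace hm.1.1 hm.2.2.2.2]

/-- The multiple of `#A` beyond which the number of edges leaving `A` in a random dicore with at
most `c * N` edges has a geometric tail with ratio `1 / Q`. -/
def tailStart (k2 c Q : ℕ) : ℕ := k2 + 2 * c + 4 * c * Q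

lemma card_outDeg_eq_tailStart_mul_pow_le {Q : ℕ} (hN : 8 ≤ N) (hc : 0 < c) (hM : M ≤ c * N)
    {A : Finset (Fin N)} (hA : 8 * #A ≤ N) (j : ℕ) :
    (#{E ∈ dicores k1 k2 N M | outDeg E A = tailStart k2 c Q * #A + j} : ℝ) * (Q : ℝ) ^ j ≤
      #(dicores k1 k2 N M) := by
  induction j with
  | zero => simpa only [pow_zero, mul_one, Nat.cast_le] using card_filter_le _ _
  | succ j ih =>
    set x : ℝ := (#{E ∈ dicores k1 k2 N M | outDeg E A = tailStart k2 c Q * #A + (j + 1)} : ℝ)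
      with hx
    set y : ℝ := (#{E ∈ dicores k1 k2 N M | outDeg E A = tailStart k2 c Q * #A + j} : ℝ)
    suffices hratio : x * Q ≤ y by
      calc x * (Q : ℝ) ^ (j + 1) = (x * Q) * (Q : ℝ) ^ j := by ring
        _ ≤ y * (Q : ℝ) ^ j := by gcongr
        _ ≤ #(dicores k1 k2 N M) := ih
    obtain rfl | hA0 := A.eq_empty_or_nonempty
    · have : x = 0 := by simp [hx, outDeg]
      simpa only [this, zero_mul] using Nat.cast_nonneg _
    have hA0 : (0 : ℝ) < #A := by exact_mod_cast hA0.card_pos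
    have hc : (0 : ℝ) < c := by exact_mod_cast hc
    have hN0 : (0 : ℝ) < N := by exact_mod_cast (by lia : 0 < N)
    refine le_of_mul_le_mul_right ?_ (by positivity : (0 : ℝ) < c * N * #A)
    calc x * Q * (c * N * #A) = x * (4 * c * Q * #A * (N / 4)) := by ring
      _ ≤ x * ((((tailStart k2 c Q * #A + j : ℕ) : ℝ) + 1 - (k2 + 2 * c) * #A) * (N / 4)) := by
        gcongr
        simp only [tailStart]
        push_cast
        linarith [(Nat.cast_nonneg j : (0 : ℝ) ≤ j)]
      _ ≤ y * (M * #A) := card_outDeg_eq_succ_mul_le hN hM hA _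
      _ ≤ y * (c * N * #A) := by
        gcongr
        exact_mod_cast hM

end Tail

/-! ### Rare properties of dicores -/

section UnionBound

variable {α : Type*} (D : Finset α) {P : α → Prop}

lemma card_filter_le_sum [DecidablePred P] {ι : Type*} (I : Finset ι) {R : ι → α → Prop}
    [∀ i, DecidablePred (R i)] {f : ι → ℝ}
    (hcov : ∀ E ∈ D, P E → ∃ i ∈ I, R i E) (hf : ∀ i ∈ I, (#{E ∈ D | R i E} : ℝ) ≤ f i) :
    (#{E ∈ D | P E} : ℝ) ≤ ∑ i ∈ I, f i := by
  have hsub : {E ∈ D | P E} ⊆ I.biUnion fun i => {E ∈ D | R i E} := fun E hE => by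
    obtain ⟨hED, hPE⟩ := mem_filter.1 hE
    obtain ⟨i, hi, hRE⟩ := hcov E hED hPE
    exact mem_biUnion.2 ⟨i, hi, mem_filter.2 ⟨hED, hRE⟩⟩
  calc (#{E ∈ D | P E} : ℝ) ≤ ∑ i ∈ I, (#{E ∈ D | R i E} : ℝ) := by
        exact_mod_cast (card_le_card hsub).trans card_biUnion_le
    _ ≤ ∑ i ∈ I, f i := sum_le_sum hf

lemma card_filter_le_add {R S : α → Prop} (hcov : ∀ E ∈ D, P E → R E ∨ S E) :
    (#{E ∈ D | P E} : ℝ) ≤ #{E ∈ D | R E} + #{E ∈ D | S E} := by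
  have hsub : {E ∈ D | P E} ⊆ {E ∈ D | R E} ∪ {E ∈ D | S E} := by
    rw [← filter_or]
    exact fun E hE => mem_filter.2 ⟨(mem_filter.1 hE).1, (mem_filter.1 hE).elim (hcov E)⟩
  exact_mod_cast (card_le_card hsub).trans (card_union_le _ _)

end UnionBound

lemma card_filter_dicores_rev (k1 k2 N M : ℕ) (P : Finset (Fin N × Fin N) → Prop) :
    #{E ∈ dicores k1 k2 N M | P (rev E)} = #{E ∈ dicores k2 k1 N M | P E} :=
  card_nbij' rev rev
    (fun E hE => by
      simp only [coe_filter, mem_dicores, Set.mem_ofPred_eq] at hE ⊢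
      exact ⟨hE.1.rev, hE.2⟩)
    (fun E hE => by
      simp only [coe_filter, mem_dicores, Set.mem_ofPred_eq, rev_rev] at hE ⊢
      exact ⟨hE.1.rev, hE.2⟩)
    (fun E _ => rev_rev E) (fun E _ => rev_rev E)

/-- A property of digraphs that a random `(k1,k2)`-dicore with between `2 * N` and `c * N` edges
has with probability `O(N ^ (-q))`. -/
def Rare (k1 k2 c q : ℕ) (P : ∀ N : ℕ, Finset (Fin N × Fin N) → Prop) : Prop :=
  ∃ C : ℝ, 0 < C ∧ ∀ N M : ℕ, 0 < N → 2 * N ≤ M → M ≤ c * N →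
    (#{E ∈ dicores k1 k2 N M | P N E} : ℝ) * (N : ℝ) ^ q ≤ C * #(dicores k1 k2 N M)

namespace Rare

variable {k1 k2 c q : ℕ} {P P' : ∀ N : ℕ, Finset (Fin N × Fin N) → Prop}

lemma mono (h : Rare k1 k2 c q P) (hP : ∀ N M E, IsDicore k1 k2 N M E → P' N E → P N E) :
    Rare k1 k2 c q P' := by
  obtain ⟨C, hC, h⟩ := h
  refine ⟨C, hC, fun N M hN h2N hcN => le_trans ?_ (h N M hN h2N hcN)⟩
  gcongr ?_ * _
  exact_mod_cast card_le_card fun E hE => by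
    obtain ⟨hE, hP'⟩ := mem_filter.1 hE
    exact mem_filter.2 ⟨hE, hP N M E (mem_dicores.1 hE) hP'⟩

lemma or (h : Rare k1 k2 c q P) (h' : Rare k1 k2 c q P') :
    Rare k1 k2 c q fun N E => P N E ∨ P' N E := by
  obtain ⟨C, hC, h⟩ := h
  obtain ⟨C', hC', h'⟩ := h'
  refine ⟨C + C', by positivity, fun N M hN h2N hcN => ?_⟩
  calc _ ≤ (#{E ∈ dicores k1 k2 N M | P N E} + #{E ∈ dicores k1 k2 N M | P' N E} : ℝ) * N ^ q :=
        mul_le_mul_of_nonneg_right (card_filter_le_add _ fun _ _ => id) (by positivity)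
    _ ≤ (C + C') * #(dicores k1 k2 N M) := by linarith [h N M hN h2N hcN, h' N M hN h2N hcN]

lemma reverse (h : Rare k2 k1 c q P) : Rare k1 k2 c q fun N E => P N (rev E) := by
  obtain ⟨C, hC, h⟩ := h
  refine ⟨C, hC, fun N M hN h2N hcN => ?_⟩
  have htotal := card_filter_dicores_rev k1 k2 N M fun _ => True
  simp only [filter_true] at htotal
  rw [card_filter_dicores_rev, htotal]
  exact h N M hN h2N hcN

lemma of_forall_ge [hP : ∀ N, DecidablePred (P N)] (N₀ : ℕ) (b : ℕ → ℝ) (C : ℝ)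
    (hb : ∀ N : ℕ, 0 < N → b N * (N : ℝ) ^ q ≤ C)
    (h : ∀ N M : ℕ, N₀ ≤ N → 0 < N → 2 * N ≤ M → M ≤ c * N →
      (#{E ∈ dicores k1 k2 N M | P N E} : ℝ) ≤ b N * #(dicores k1 k2 N M)) :
    Rare k1 k2 c q P := by
  obtain rfl : hP = fun _ _ => Classical.propDecidable _ := Subsingleton.elim _ _
  refine ⟨|C| + (N₀ : ℝ) ^ q + 1, by positivity, fun N M hN h2N hcN => ?_⟩
  obtain hN₀ | hN₀ := le_total N₀ N
  · calc (#{E ∈ dicores k1 k2 N M | P N E} : ℝ) * (N : ℝ) ^ q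
      _ ≤ b N * #(dicores k1 k2 N M) * (N : ℝ) ^ q := by
        gcongr
        exact h N M hN₀ hN h2N hcN
      _ = b N * (N : ℝ) ^ q * #(dicores k1 k2 N M) := by ring
      _ ≤ (|C| + (N₀ : ℝ) ^ q + 1) * #(dicores k1 k2 N M) := by
        gcongr
        linarith [hb N hN, le_abs_self C, show (0 : ℝ) ≤ (N₀ : ℝ) ^ q by positivity]
  · calc (#{E ∈ dicores k1 k2 N M | P N E} : ℝ) * (N : ℝ) ^ q
      _ ≤ #(dicores k1 k2 N M) * (N₀ : ℝ) ^ q := by gcongr; exact filter_subset _ _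
      _ = (N₀ : ℝ) ^ q * #(dicores k1 k2 N M) := mul_comm _ _
      _ ≤ (|C| + (N₀ : ℝ) ^ q + 1) * #(dicores k1 k2 N M) := by
        gcongr
        linarith [abs_nonneg C]

end Rare

lemma exists_pow_mul_pow_le (j : ℕ) {r : ℝ} (hr₀ : 0 ≤ r) (hr₁ : r < 1) :
    ∃ C : ℝ, ∀ n : ℕ, (n : ℝ) ^ j * r ^ n ≤ C := by
  obtain ⟨C, hC⟩ := (tendsto_pow_const_mul_const_pow_of_lt_one j hr₀ hr₁).bddAbove_range
  exact ⟨C, fun n => hC ⟨n, rfl⟩⟩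

/-! ### Tightness -/

section Tight

variable {k1 k2 c N M : ℕ} {E : Finset (Fin N × Fin N)} {s s' t κ : ℝ}

/-- Tightness of the degrees, at one scale: at most `s * N` vertices are incident with at most
`t * N` edges in each direction. -/
def IsTight (s t : ℝ) (E : Finset (Fin N × Fin N)) : Prop :=
  ∀ Z : Finset (Fin N), (#Z : ℝ) ≤ s * N → (outDeg E Z : ℝ) ≤ t * N ∧ (inDeg E Z : ℝ) ≤ t * N

lemma IsTight.mono (h : IsTight s t E) (hs : s' ≤ s) : IsTight s' t E := fun Z hZ =>
  h Z (hZ.trans (by gcongr))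

lemma IsTight.subset {Q : Finset (Fin N × Fin N)} (h : IsTight s t E) (hQ : Q ⊆ E) :
    IsTight s t Q := fun Z hZ => by
  have hout : (outDeg Q Z : ℝ) ≤ outDeg E Z := by
    exact_mod_cast card_le_card (filter_subset_filter _ hQ)
  have hin : (inDeg Q Z : ℝ) ≤ inDeg E Z := by
    exact_mod_cast card_le_card (filter_subset_filter _ hQ)
  exact ⟨hout.trans (h Z hZ).1, hin.trans (h Z hZ).2⟩

lemma IsTight.exchange {u v x y : Fin N} (hE : IsTight s t E) (h : Exchangeable E u v x y) :
    IsTight s t (exchange E u v x y) := fun Z hZ => by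
  rw [h.outDeg_exchange, h.inDeg_exchange]
  exact hE Z hZ

lemma card_outDeg_eq_mul_four_pow_le {p m : ℕ} (hN : 8 ≤ N) (hc : 0 < c) (hM : M ≤ c * N)
    (hκ : 0 < κ) (hp : 2 / κ ≤ p) {Z : Finset (Fin N)} (hZ : 8 * #Z ≤ N)
    (hstart : (tailStart k2 c (4 ^ p) * #Z : ℝ) ≤ κ * N / 2) (hm : κ * N ≤ m) :
    (#{E ∈ dicores k1 k2 N M | outDeg E Z = m} : ℝ) * 4 ^ N ≤ #(dicores k1 k2 N M) := by
  have : 0 ≤ κ * N := by positivity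
  obtain ⟨j, rfl⟩ := Nat.exists_eq_add_of_le (n := m) (m := tailStart k2 c (4 ^ p) * #Z) (by
    exact_mod_cast (by linarith : (tailStart k2 c (4 ^ p) * #Z : ℝ) ≤ m))
  have hj : κ * N / 2 ≤ j := by
    push_cast at hm
    linarith
  have hNpj : N ≤ p * j := by
    have : (N : ℝ) ≤ p * j :=
      calc (N : ℝ) = 2 / κ * (κ * N / 2) := by field_simp
        _ ≤ p * j := by gcongr
    exact_mod_cast this
  refine le_trans ?_ (card_outDeg_eq_tailStart_mul_pow_le (Q := 4 ^ p) hN hc hM hZ j)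
  gcongr
  calc (4 : ℝ) ^ N ≤ 4 ^ (p * j) := pow_le_pow_right₀ (by norm_num) hNpj
    _ = ((4 ^ p : ℕ) : ℝ) ^ j := by push_cast; exact pow_mul _ _ _

lemma card_lt_outDeg_and_eq_le {p : ℕ} (hN : 8 ≤ N) (hc : 0 < c) (hM : M ≤ c * N) (hκ : 0 < κ)
    (hp : 2 / κ ≤ p) (hs : 8 * s ≤ 1) (hstart : tailStart k2 c (4 ^ p) * s ≤ κ / 2)
    (Z : Finset (Fin N)) (m : ℕ) :
    (#{E ∈ dicores k1 k2 N M | ((#Z : ℝ) ≤ s * N ∧ κ * N < m) ∧ outDeg E Z = m} : ℝ) ≤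
      (1 / 4) ^ N * #(dicores k1 k2 N M) := by
  by_cases h : (#Z : ℝ) ≤ s * N ∧ κ * N < m
  · have hZ : 8 * #Z ≤ N := by
      have : (8 : ℝ) * #Z ≤ N :=
        calc (8 : ℝ) * #Z ≤ 8 * s * N := by linarith [h.1]
          _ ≤ 1 * N := by gcongr
          _ = N := one_mul _
      exact_mod_cast this
    have hZstart : (tailStart k2 c (4 ^ p) * #Z : ℝ) ≤ κ * N / 2 :=
      calc (tailStart k2 c (4 ^ p) * #Z : ℝ) ≤ tailStart k2 c (4 ^ p) * (s * N) := by
            gcongr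
            exact h.1
        _ = tailStart k2 c (4 ^ p) * s * N := by ring
        _ ≤ κ / 2 * N := by gcongr
        _ = κ * N / 2 := by ring
    rw [one_div, inv_pow, ← div_eq_inv_mul, le_div_iff₀ (by positivity)]
    simp only [h, and_self, true_and]
    exact card_outDeg_eq_mul_four_pow_le hN hc hM hκ hp hZ hZstart h.2.le
  · simp only [h, false_and, filter_false, card_empty, Nat.cast_zero]
    positivity

lemma card_exists_lt_outDeg_le {p : ℕ} (hN : 8 ≤ N) (hc : 0 < c) (hM : M ≤ c * N) (hκ : 0 < κ)
    (hp : 2 / κ ≤ p) (hs : 8 * s ≤ 1) (hstart : tailStart k2 c (4 ^ p) * s ≤ κ / 2) :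
    (#{E ∈ dicores k1 k2 N M | ∃ Z : Finset (Fin N), (#Z : ℝ) ≤ s * N ∧ κ * N < outDeg E Z} : ℝ) ≤
      (c + 1) * N * (1 / 2) ^ N * #(dicores k1 k2 N M) := by
  refine (card_filter_le_sum _ ((univ : Finset (Finset (Fin N))) ×ˢ range (M + 1)) ?_
    fun i _ => card_lt_outDeg_and_eq_le hN hc hM hκ hp hs hstart i.1 i.2).trans ?_
  · rintro E hE ⟨Z, hZ, hout⟩
    have := (outDeg_le_card E Z).trans_eq (mem_dicores.1 hE).1
    exact ⟨(Z, outDeg E Z), by simp only [mem_product, mem_univ, mem_range]; lia, ⟨hZ, hout⟩, rfl⟩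
  have hindices : (#((univ : Finset (Finset (Fin N))) ×ˢ range (M + 1)) : ℝ) ≤
      2 ^ N * ((c + 1) * N) := by
    rw [card_product, card_range, card_univ, Fintype.card_finset, Fintype.card_fin]
    exact_mod_cast Nat.mul_le_mul_left _ (by lia : M + 1 ≤ (c + 1) * N)
  rw [sum_const, nsmul_eq_mul]
  calc (#((univ : Finset (Finset (Fin N))) ×ˢ range (M + 1)) : ℝ) *
        ((1 / 4) ^ N * #(dicores k1 k2 N M))
    _ ≤ 2 ^ N * ((c + 1) * N) * ((1 / 4) ^ N * #(dicores k1 k2 N M)) := by gcongr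
    _ = (c + 1) * N * (2 * (1 / 4)) ^ N * #(dicores k1 k2 N M) := by rw [mul_pow]; ring
    _ = (c + 1) * N * (1 / 2) ^ N * #(dicores k1 k2 N M) := by norm_num

lemma exists_rare_exists_lt_outDeg (k1 k2 c q : ℕ) {κ : ℝ} (hκ : 0 < κ) :
    ∃ s : ℝ, 0 < s ∧ Rare k1 k2 c q
      fun N E => ∃ Z : Finset (Fin N), (#Z : ℝ) ≤ s * N ∧ κ * N < outDeg E Z := by
  obtain ⟨p, hp⟩ := exists_nat_ge (2 / κ)
  obtain ⟨s, hs₀, hs, hstart⟩ :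
      ∃ s : ℝ, 0 < s ∧ 8 * s ≤ 1 ∧ tailStart k2 c (4 ^ p) * s ≤ κ / 2 := by
    generalize tailStart k2 c (4 ^ p) = K
    refine ⟨min (κ / (2 * (K + 1))) (1 / 8), by positivity, ?_, ?_⟩
    · linarith [min_le_right (κ / (2 * ((K : ℝ) + 1))) (1 / 8)]
    · calc K * min (κ / (2 * ((K : ℝ) + 1))) (1 / 8) ≤ (K + 1) * (κ / (2 * ((K : ℝ) + 1))) := by
            gcongr
            exacts [by linarith, min_le_left _ _]
        _ = κ / 2 := by field_simp
  obtain ⟨C, hC⟩ := exists_pow_mul_pow_le (q + 1) (r := 1 / 2) (by norm_num) (by norm_num)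
  refine ⟨s, hs₀, Rare.of_forall_ge 8 (fun N => (c + 1) * N * (1 / 2) ^ N) ((c + 1) * C)
    (fun N _ => ?_) fun N M hN _ h2N hcN => ?_⟩
  · calc (c + 1 : ℝ) * N * (1 / 2) ^ N * N ^ q = (c + 1) * (N ^ (q + 1) * (1 / 2) ^ N) := by ring
      _ ≤ (c + 1) * C := by gcongr; exact hC N
  · have hc : 0 < c := Nat.pos_of_mul_pos_right (by lia : 0 < c * N)
    exact card_exists_lt_outDeg_le hN hc hcN hκ hp hs hstart

lemma exists_rare_not_isTight (k1 k2 c q : ℕ) {κ : ℝ} (hκ : 0 < κ) : ∃ s : ℝ, 0 < s ∧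
    Rare k1 k2 c q fun _ E => ¬ IsTight s κ E := by
  obtain ⟨s, hs, hout⟩ := exists_rare_exists_lt_outDeg k1 k2 c q hκ
  obtain ⟨s', hs', hin⟩ := exists_rare_exists_lt_outDeg k2 k1 c q hκ
  refine ⟨min s s', lt_min hs hs', (hout.or hin.reverse).mono fun N M E _ hE => ?_⟩
  simp only [IsTight, not_forall, not_and_or, not_le] at hE
  obtain ⟨Z, hZ, hE⟩ := hE
  simp only [outDeg_rev]
  refine hE.imp (fun h => ⟨Z, hZ.trans ?_, h⟩) (fun h => ⟨Z, hZ.trans ?_, h⟩)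
  · gcongr; exact min_le_left _ _
  · gcongr; exact min_le_right _ _

end Tight

/-! ### Moments of the out-degree of a small set -/

lemma add_pow_le_pow_mul_three_pow {b p : ℕ} (hp : p ≤ b) (j : ℕ) :
    ((b : ℝ) + j) ^ p ≤ (b : ℝ) ^ p * 3 ^ j := by
  obtain rfl | hb := b.eq_zero_or_pos
  · obtain rfl := Nat.le_zero.1 hp
    simpa only [pow_zero, one_mul] using one_le_pow₀ (by norm_num : (1 : ℝ) ≤ 3)
  have hb : (0 : ℝ) < b := by exact_mod_cast hb
  calc ((b : ℝ) + j) ^ p = (b : ℝ) ^ p * (j / b + 1) ^ p := by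
        rw [← mul_pow]
        congr 1
        field_simp
        ring
    _ ≤ (b : ℝ) ^ p * (j / b + 1) ^ b := by
      gcongr
      linarith [show (0 : ℝ) ≤ j / b by positivity]
    _ ≤ (b : ℝ) ^ p * Real.exp (j / b) ^ b := by
      gcongr
      exact Real.add_one_le_exp _
    _ = (b : ℝ) ^ p * Real.exp 1 ^ j := by
      rw [← Real.exp_nat_mul, ← Real.exp_nat_mul, mul_div_cancel₀ _ hb.ne', mul_one]
    _ ≤ (b : ℝ) ^ p * 3 ^ j := by
      gcongr
      exact Real.exp_one_lt_three.le

lemma pow_le_pow_mul_three_pow_sub {b p : ℕ} (hp : p ≤ b) (m : ℕ) :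
    (m : ℝ) ^ p ≤ (b : ℝ) ^ p * 3 ^ (m - b) :=
  calc (m : ℝ) ^ p ≤ ((b : ℝ) + (m - b : ℕ)) ^ p := by
        gcongr
        exact_mod_cast (by lia : m ≤ b + (m - b))
    _ ≤ (b : ℝ) ^ p * 3 ^ (m - b) := add_pow_le_pow_mul_three_pow hp _

section Moments

variable {k1 k2 c N M : ℕ}

lemma card_outDeg_sub_eq_mul_three_pow_le (hN : 8 ≤ N) (hc : 0 < c) (hM : M ≤ c * N)
    {A : Finset (Fin N)} (hA : 8 * #A ≤ N) (j : ℕ) :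
    (#{E ∈ dicores k1 k2 N M | outDeg E A - tailStart k2 c 6 * #A = j} : ℝ) * 3 ^ j ≤
      (1 / 2) ^ j * #(dicores k1 k2 N M) := by
  have h : (#{E ∈ dicores k1 k2 N M | outDeg E A - tailStart k2 c 6 * #A = j} : ℝ) * 6 ^ j ≤
      #(dicores k1 k2 N M) := by
    obtain rfl | hj := j.eq_zero_or_pos
    · simpa only [pow_zero, mul_one, Nat.cast_le] using card_filter_le _ _
    · have heq : ∀ m : ℕ, m - tailStart k2 c 6 * #A = j ↔ m = tailStart k2 c 6 * #A + j := by lia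
      simp only [heq]
      exact_mod_cast card_outDeg_eq_tailStart_mul_pow_le (Q := 6) hN hc hM hA j
  rw [one_div, inv_pow, ← div_eq_inv_mul, le_div_iff₀ (by positivity), mul_assoc, ← mul_pow]
  norm_num only
  exact h

lemma sum_three_pow_outDeg_sub_le (hN : 8 ≤ N) (hc : 0 < c) (hM : M ≤ c * N)
    {A : Finset (Fin N)} (hA : 8 * #A ≤ N) :
    ∑ E ∈ dicores k1 k2 N M, (3 : ℝ) ^ (outDeg E A - tailStart k2 c 6 * #A) ≤
      2 * #(dicores k1 k2 N M) := by
  set D := dicores k1 k2 N M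
  set excess : Finset (Fin N × Fin N) → ℕ := fun E => outDeg E A - tailStart k2 c 6 * #A
  have hmaps : ∀ E ∈ D, excess E ∈ range (M + 1) := fun E hE => by
    have := (outDeg_le_card E A).trans_eq (mem_dicores.1 hE).1
    exact mem_range.2 (by lia)
  calc ∑ E ∈ D, (3 : ℝ) ^ excess E
    _ = ∑ j ∈ range (M + 1), (#{E ∈ D | excess E = j} : ℝ) * 3 ^ j := by
      simp only [← sum_fiberwise_of_maps_to' hmaps, sum_const, nsmul_eq_mul]
    _ ≤ ∑ j ∈ range (M + 1), (1 / 2) ^ j * (#D : ℝ) :=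
      sum_le_sum fun j _ => card_outDeg_sub_eq_mul_three_pow_le hN hc hM hA j
    _ ≤ 2 * #D := by
      rw [← sum_mul]
      gcongr
      exact sum_geometric_two_le _

lemma sum_outDeg_pow_le {p : ℕ} (hN : 8 ≤ N) (hc : 0 < c) (hM : M ≤ c * N)
    {A : Finset (Fin N)} (hA : 8 * #A ≤ N) (hp : p ≤ tailStart k2 c 6 * #A) :
    ∑ E ∈ dicores k1 k2 N M, (outDeg E A : ℝ) ^ p ≤
      2 * (tailStart k2 c 6 * #A : ℝ) ^ p * #(dicores k1 k2 N M) := by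
  set b := tailStart k2 c 6 * #A with hb
  calc ∑ E ∈ dicores k1 k2 N M, (outDeg E A : ℝ) ^ p
    _ ≤ ∑ E ∈ dicores k1 k2 N M, (b : ℝ) ^ p * 3 ^ (outDeg E A - b) :=
      sum_le_sum fun E _ => pow_le_pow_mul_three_pow_sub hp _
    _ = (b : ℝ) ^ p * ∑ E ∈ dicores k1 k2 N M, (3 : ℝ) ^ (outDeg E A - b) := by rw [mul_sum]
    _ ≤ (b : ℝ) ^ p * (2 * #(dicores k1 k2 N M)) := by
      gcongr
      exact sum_three_pow_outDeg_sub_le hN hc hM hA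
    _ = 2 * (tailStart k2 c 6 * #A : ℝ) ^ p * #(dicores k1 k2 N M) := by
      rw [hb, Nat.cast_mul]
      ring

end Moments

/-! ### Inflow into a small set -/

section Inflow

variable {V : Type*} [DecidableEq V]

/-- The number of edges entering `A` from outside `W`. -/
def inflow (E : Finset (V × V)) (A W : Finset V) : ℕ := #{e ∈ E | e.1 ∉ W ∧ e.2 ∈ A}

/-- The edges of `E` from `W` to `A`. -/
def edgesBetween (E : Finset (V × V)) (W A : Finset V) : Finset (V × V) :=
  {e ∈ E | e.1 ∈ W ∧ e.2 ∈ A}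

/-- The edges outside `W` that can be exchanged with the edge `e`. -/
def partners (E : Finset (V × V)) (W : Finset V) (e : V × V) : Finset (V × V) :=
  {g ∈ E | (g.1 ∉ W ∧ (g.1, e.2) ∉ E) ∧ g.2 ∉ W ∧ (e.1, g.2) ∉ E}

variable {E : Finset (V × V)} {A W : Finset V}

lemma card_edgesBetween_add_inflow (E : Finset (V × V)) (W A : Finset V) :
    #(edgesBetween E W A) + inflow E A W = inDeg E A := by
  rw [inDeg, ← card_filter_add_card_filter_not (s := {e ∈ E | e.2 ∈ A}) (fun e => e.1 ∈ W)]
  simp only [edgesBetween, inflow, filter_filter, and_comm]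

lemma exchangeable_of_mem_partners {u v x y : V} (he : (u, v) ∈ E)
    (hg : (x, y) ∈ partners E W (u, v)) : Exchangeable E u v x y := by
  obtain ⟨hxy, ⟨-, hxv⟩, -, huy⟩ := mem_filter.1 hg
  exact ⟨he, hxy, hxv, huy⟩

lemma inflow_exchange {u v x y : V} (hAW : A ⊆ W) (he : (u, v) ∈ edgesBetween E W A)
    (hg : (x, y) ∈ partners E W (u, v)) :
    inflow (exchange E u v x y) A W = inflow E A W + 1 := by
  obtain ⟨huv, hu, hv⟩ := mem_filter.1 he
  obtain ⟨-, ⟨hx, -⟩, hy, -⟩ := mem_filter.1 hg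
  have hcount := (exchangeable_of_mem_partners huv hg).card_filter_exchange
    fun e => e.1 ∉ W ∧ e.2 ∈ A
  simpa only [inflow, hu, hv, hx, notMem_mono hAW hy, not_true_eq_false, not_false_eq_true,
    and_true, and_false, if_true, if_false, add_zero] using hcount

lemma card_filter_mem_le_inDeg [Fintype V] (E : Finset (V × V)) {v : V} (hv : v ∈ A) :
    #{x | (x, v) ∈ E} ≤ inDeg E A :=
  card_le_card_of_injOn (fun x => (x, v)) (fun x hx => by simpa [hv] using hx)
    fun _ _ _ _ h => (Prod.mk.inj h).1

lemma card_filter_mem_le_outDeg [Fintype V] (E : Finset (V × V)) {u : V} (hu : u ∈ A) :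
    #{y | (u, y) ∈ E} ≤ outDeg E A :=
  card_le_card_of_injOn (fun y => (u, y)) (fun y hy => by simpa [hu] using hy)
    fun _ _ _ _ h => (Prod.mk.inj h).2

end Inflow

section Tight

variable {N : ℕ} {κ s s' t : ℝ} {E Q : Finset (Fin N × Fin N)} {W : Finset (Fin N)}

lemma IsTight.card_sub_le_card_filter_notMem (h : IsTight s t E) {X Y : Finset (Fin N)}
    (hX : (#X : ℝ) ≤ s * N) (hY : (#Y : ℝ) ≤ s * N) :
    (#E : ℝ) - 2 * t * N ≤ #{e ∈ E | e.1 ∉ X ∧ e.2 ∉ Y} := by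
  have hcover : E ⊆ {e ∈ E | e.1 ∉ X ∧ e.2 ∉ Y} ∪ {e ∈ E | e.1 ∈ X} ∪ {e ∈ E | e.2 ∈ Y} := by
    intro e he
    simp only [mem_union, mem_filter]
    tauto
  have hcard : (#E : ℝ) ≤ #{e ∈ E | e.1 ∉ X ∧ e.2 ∉ Y} + outDeg E X + inDeg E Y := by
    exact_mod_cast (card_le_card hcover).trans <| (card_union_le _ _).trans <|
      Nat.add_le_add_right (card_union_le _ _) _
  linarith [(h X hX).1, (h Y hY).2]

/-- Tightness at two scales: at most `s * N` vertices are incident with few edges, and the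
neighbourhood of `s' * N` vertices is small compared with `s * N`, so that few edges cannot be
exchanged with a given edge. -/
def IsTwoScaleTight (κ s s' : ℝ) (E : Finset (Fin N × Fin N)) : Prop :=
  IsTight s κ E ∧ IsTight s' (s / 4) E

lemma IsTwoScaleTight.exchange {u v x y : Fin N} (hE : IsTwoScaleTight κ s s' E)
    (h : Exchangeable E u v x y) : IsTwoScaleTight κ s s' (exchange E u v x y) :=
  ⟨hE.1.exchange h, hE.2.exchange h⟩

lemma IsTwoScaleTight.card_sub_le_card_inter_partners (h : IsTwoScaleTight κ s s' E) (hQ : Q ⊆ E)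
    (hW : (#W : ℝ) ≤ s' * N) (hs : s' ≤ s / 4) {e : Fin N × Fin N} (he₁ : e.1 ∈ W) (he₂ : e.2 ∈ W) :
    (#Q : ℝ) - 2 * κ * N ≤ #(Q ∩ partners E W e) := by
  have hWs : (#W : ℝ) ≤ s / 4 * N := hW.trans (by gcongr)
  have : 0 ≤ s / 4 * N := (Nat.cast_nonneg _).trans hWs
  set badTails : Finset (Fin N) := W ∪ univ.filter fun x => (x, e.2) ∈ E
  set badHeads : Finset (Fin N) := W ∪ univ.filter fun y => (e.1, y) ∈ E
  have htails : (#badTails : ℝ) ≤ s * N := by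
    have : (#badTails : ℝ) ≤ #W + inDeg E W := by
      exact_mod_cast (card_union_le _ _).trans
        (Nat.add_le_add_left (card_filter_mem_le_inDeg E he₂) _)
    linarith [(h.2 W hW).2]
  have hheads : (#badHeads : ℝ) ≤ s * N := by
    have : (#badHeads : ℝ) ≤ #W + outDeg E W := by
      exact_mod_cast (card_union_le _ _).trans
        (Nat.add_le_add_left (card_filter_mem_le_outDeg E he₁) _)
    linarith [(h.2 W hW).1]
  have hpartners : Q ∩ partners E W e = {g ∈ Q | g.1 ∉ badTails ∧ g.2 ∉ badHeads} := by
    rw [partners, ← filter_mem_eq_inter]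
    refine filter_congr fun g hg => ?_
    simp only [badTails, badHeads, mem_filter, mem_union, mem_univ, true_and, not_or, hQ hg]
  rw [hpartners]
  exact (h.1.subset hQ).card_sub_le_card_filter_notMem htails hheads

end Tight

section Level

variable {k1 k2 c N M : ℕ} {s s' : ℝ} {A W : Finset (Fin N)}

/-- The tight dicores with prescribed in-degree `f` of `A`, out-degree `m` of `W`, and number `l`
of edges entering `A` from outside `W`; exchanging edges moves between consecutive values
of `l`. -/
noncomputable def level (k1 k2 M : ℕ) (s s' : ℝ) (A W : Finset (Fin N)) (f m l : ℕ) :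
    Finset (Finset (Fin N × Fin N)) :=
  {E ∈ dicores k1 k2 N M |
    IsTwoScaleTight (1 / 2) s s' E ∧ inDeg E A = f ∧ outDeg E W = m ∧ inflow E A W = l}

lemma exchange_mem_level (hAW : A ⊆ W) {f m l : ℕ} {E : Finset (Fin N × Fin N)} {u v x y : Fin N}
    (hE : E ∈ level k1 k2 M s s' A W f m l) (he : (u, v) ∈ edgesBetween E W A)
    (hg : (x, y) ∈ partners E W (u, v)) :
    exchange E u v x y ∈ level k1 k2 M s s' A W f m (l + 1) := by
  obtain ⟨hED, hT, rfl, rfl, rfl⟩ := mem_filter.1 hE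
  have h := exchangeable_of_mem_partners (mem_filter.1 he).1 hg
  refine mem_filter.2 ⟨mem_dicores.2 ((mem_dicores.1 hED).exchange h ?_ ?_),
    hT.exchange h, h.inDeg_exchange A, h.outDeg_exchange W,
    inflow_exchange hAW he hg⟩
  · rintro rfl
    exact (mem_filter.1 hg).2.1.1 (hAW (mem_filter.1 he).2.2)
  · rintro rfl
    exact (mem_filter.1 hg).2.2.1 (mem_filter.1 he).2.1

lemma card_level_mul_le (hM : 2 * N ≤ M) (hAW : A ⊆ W) (hW : (#W : ℝ) ≤ s' * N)
    (hs : s' ≤ s / 4) (f m l : ℕ) :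
    (#(level k1 k2 M s s' A W f m l) : ℝ) * (((f : ℝ) - l) * N) ≤
      #(level k1 k2 M s s' A W f m (l + 1)) * ((l + 1) * m) := by
  refine card_mul_le_card_mul_of_moves
    (fun E => (edgesBetween E W A).sigma fun e => partners E W e)
    (fun F => ({e ∈ F | e.1 ∉ W ∧ e.2 ∈ A} : Finset _) ×ˢ ({e ∈ F | e.1 ∈ W} : Finset _))
    (fun E m => exchange E m.1.1 m.1.2 m.2.1 m.2.2)
    (fun _ m => ((m.2.1, m.1.2), (m.1.1, m.2.2)))
    (fun F l => (exchange F l.1.1 l.1.2 l.2.1 l.2.2, ⟨(l.2.1, l.1.2), (l.1.1, l.2.2)⟩)) ?_ ?_ ?_ ?_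
  · intro E hE
    obtain ⟨hED, hT, rfl, -, rfl⟩ := mem_filter.1 hE
    calc ((inDeg E A : ℝ) - inflow E A W) * N = ∑ _e ∈ edgesBetween E W A, (N : ℝ) := by
          rw [sum_const, nsmul_eq_mul, ← card_edgesBetween_add_inflow E W A, Nat.cast_add,
            add_sub_cancel_right]
      _ ≤ #((edgesBetween E W A).sigma fun e => partners E W e) := by
        rw [card_sigma, Nat.cast_sum]
        refine sum_le_sum fun e he => ?_
        have hME : (2 : ℝ) * N ≤ #E := by exact_mod_cast hM.trans_eq (mem_dicores.1 hED).1.symm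
        have hpartners := hT.card_sub_le_card_inter_partners Subset.rfl hW hs (mem_filter.1 he).2.1
          (hAW (mem_filter.1 he).2.2)
        rw [inter_eq_right.2 (by unfold partners; exact filter_subset _ _)] at hpartners
        linarith
  · intro F hF
    obtain ⟨-, -, -, hm, hl⟩ := mem_filter.1 hF
    simp only [inflow, outDeg] at hl hm
    rw [card_product, hl, hm, Nat.cast_mul, Nat.cast_succ]
  · rintro E hE ⟨⟨u, v⟩, ⟨x, y⟩⟩ hm
    obtain ⟨he, hg⟩ := mem_sigma.1 hm
    refine ⟨exchange_mem_level hAW hE he hg, ?_⟩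
    have h := exchangeable_of_mem_partners (mem_filter.1 he).1 hg
    exact mem_product.2 ⟨mem_filter.2 ⟨h.mem_exchange.2 (Or.inl rfl), (mem_filter.1 hg).2.1.1,
      (mem_filter.1 he).2.2⟩, mem_filter.2 ⟨h.mem_exchange.2 (Or.inr (Or.inl rfl)),
      (mem_filter.1 he).2.1⟩⟩
  · rintro E - ⟨⟨u, v⟩, ⟨x, y⟩⟩ hm
    obtain ⟨he, hg⟩ := mem_sigma.1 hm
    simp only [(exchangeable_of_mem_partners (mem_filter.1 he).1 hg).exchange_exchange]

lemma card_level_sub_mul_pow_le (hM : 2 * N ≤ M) (hAW : A ⊆ W) (hW : (#W : ℝ) ≤ s' * N)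
    (hs : s' ≤ s / 4) (f m n : ℕ) (hn : n ≤ f) :
    (#(level k1 k2 M s s' A W f m (f - n)) : ℝ) * (N : ℝ) ^ n ≤
      (f.choose n : ℝ) * (m : ℝ) ^ n * #(level k1 k2 M s s' A W f m f) := by
  induction n with
  | zero => simp
  | succ n ih =>
    have hlevel := card_level_mul_le (k1 := k1) (k2 := k2) hM hAW hW hs f m (f - (n + 1))
    have hf : f - n = f - (n + 1) + 1 := by lia
    have hgap : (f : ℝ) - (f - (n + 1) : ℕ) = n + 1 := by rw [Nat.cast_sub hn]; push_cast; ring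
    have hsucc : ((f - (n + 1) : ℕ) : ℝ) + 1 = (f - n : ℕ) := by rw [hf, Nat.cast_succ]
    rw [hgap, hsucc, ← hf] at hlevel
    have hchoose : (f.choose n : ℝ) * (f - n : ℕ) = f.choose (n + 1) * (n + 1) := by
      exact_mod_cast (Nat.choose_succ_right_eq f n).symm
    refine le_of_mul_le_mul_right ?_ (by positivity : (0 : ℝ) < n + 1)
    calc (#(level k1 k2 M s s' A W f m (f - (n + 1))) : ℝ) * (N : ℝ) ^ (n + 1) * (n + 1)
      _ = #(level k1 k2 M s s' A W f m (f - (n + 1))) * ((n + 1) * N) * (N : ℝ) ^ n := by ring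
      _ ≤ #(level k1 k2 M s s' A W f m (f - n)) * ((f - n : ℕ) * m) * (N : ℝ) ^ n := by
        gcongr ?_ * _
      _ = #(level k1 k2 M s s' A W f m (f - n)) * (N : ℝ) ^ n * ((f - n : ℕ) * m) := by ring
      _ ≤ (f.choose n * (m : ℝ) ^ n * #(level k1 k2 M s s' A W f m f)) * ((f - n : ℕ) * m) := by
        gcongr ?_ * _
        exact ih (by lia)
      _ = f.choose n * (f - n : ℕ) * (m : ℝ) ^ (n + 1) * #(level k1 k2 M s s' A W f m f) := by ring
      _ = f.choose (n + 1) * (m : ℝ) ^ (n + 1) * #(level k1 k2 M s s' A W f m f) * (n + 1) := by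
        rw [hchoose]
        ring

lemma card_level_le {l r p : ℕ} (hN : 0 < N) (hM : 2 * N ≤ M) (hAW : A ⊆ W)
    (hW : (#W : ℝ) ≤ s' * N) (hs : s' ≤ s / 4) (hs1 : s ≤ 1) (f m : ℕ) (hl : l ≤ r)
    (hp : p + r ≤ k1 * #A) :
    (#(level k1 k2 M s s' A W f m l) : ℝ) ≤ 2 ^ r * (2 * (m : ℝ) / N) ^ p *
      #{E ∈ dicores k1 k2 N M | (inDeg E A, outDeg E W) = (f, m)} := by
  have hN' : (0 : ℝ) < N := by exact_mod_cast hN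
  obtain hempty | ⟨E, hE⟩ := (level k1 k2 M s s' A W f m l).eq_empty_or_nonempty
  · rw [hempty, card_empty, Nat.cast_zero]
    positivity
  obtain ⟨hE, hT, hf, hm, -⟩ := mem_filter.1 hE
  have hle : p + r ≤ f := hp.trans (hf ▸ (mem_dicores.1 hE).mul_card_le_inDeg A)
  have hratio : 2 * (m : ℝ) / N ≤ 1 := by
    have := (hT.2 W hW).1
    rw [hm] at this
    rw [div_le_one hN']
    nlinarith
  have hchain := card_level_sub_mul_pow_le (k1 := k1) (k2 := k2) hM hAW hW hs f m (f - l) (by lia)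
  rw [Nat.sub_sub_self (by lia)] at hchain
  have htop : level k1 k2 M s s' A W f m f ⊆
      {E ∈ dicores k1 k2 N M | (inDeg E A, outDeg E W) = (f, m)} := fun E hE => by
    obtain ⟨hE, -, hf, hm, -⟩ := mem_filter.1 hE
    exact mem_filter.2 ⟨hE, Prod.ext hf hm⟩
  have hchoose : (f.choose (f - l) : ℝ) ≤ 2 ^ r * 2 ^ (f - l) := by
    rw [← pow_add]
    exact_mod_cast (Nat.choose_le_two_pow f (f - l)).trans
      (Nat.pow_le_pow_right (by norm_num) (by lia))
  calc (#(level k1 k2 M s s' A W f m l) : ℝ)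
    _ ≤ f.choose (f - l) * (m : ℝ) ^ (f - l) * #(level k1 k2 M s s' A W f m f) / N ^ (f - l) :=
      (le_div_iff₀ (by positivity)).2 hchain
    _ ≤ (2 ^ r * 2 ^ (f - l)) * (m : ℝ) ^ (f - l) * #(level k1 k2 M s s' A W f m f) /
        N ^ (f - l) := by gcongr
    _ = 2 ^ r * (2 * (m : ℝ) / N) ^ (f - l) * #(level k1 k2 M s s' A W f m f) := by
      rw [div_pow, mul_pow]
      ring
    _ ≤ 2 ^ r * (2 * (m : ℝ) / N) ^ p *
        #{E ∈ dicores k1 k2 N M | (inDeg E A, outDeg E W) = (f, m)} := by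
      have hpow := pow_le_pow_of_le_one (by positivity) hratio (by lia : p ≤ f - l)
      gcongr

lemma card_inflow_le_le_sum {r p : ℕ} (hN : 0 < N) (hM : 2 * N ≤ M) (hAW : A ⊆ W)
    (hW : (#W : ℝ) ≤ s' * N) (hs : s' ≤ s / 4) (hs1 : s ≤ 1) (hp : p + r ≤ k1 * #A) :
    (#{E ∈ dicores k1 k2 N M | IsTwoScaleTight (1 / 2) s s' E ∧ inflow E A W ≤ r} : ℝ) ≤
      (r + 1) * 2 ^ r * ∑ E ∈ dicores k1 k2 N M, (2 * (outDeg E W : ℝ) / N) ^ p := by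
  set D := dicores k1 k2 N M
  have hmaps : ∀ E ∈ D, (inDeg E A, outDeg E W) ∈ range (M + 1) ×ˢ range (M + 1) := fun E hE => by
    have hin : inDeg E A ≤ #E := card_filter_le _ _
    have hout := outDeg_le_card E W
    rw [(mem_dicores.1 hE).1] at hin hout
    simp only [mem_product, mem_range]
    lia
  calc (#{E ∈ D | IsTwoScaleTight (1 / 2) s s' E ∧ inflow E A W ≤ r} : ℝ)
    _ ≤ ∑ i ∈ range (r + 1) ×ˢ (range (M + 1) ×ˢ range (M + 1)),
        2 ^ r * (2 * (i.2.2 : ℝ) / N) ^ p * #{E ∈ D | (inDeg E A, outDeg E W) = i.2} := by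
      refine card_filter_le_sum D _ (R := fun i E => IsTwoScaleTight (1 / 2) s s' E ∧
        inDeg E A = i.2.1 ∧ outDeg E W = i.2.2 ∧ inflow E A W = i.1) ?_ ?_
      · rintro E hE ⟨hT, hr⟩
        exact ⟨(inflow E A W, inDeg E A, outDeg E W),
          mem_product.2 ⟨mem_range_succ_iff.2 hr, hmaps E hE⟩, hT, rfl, rfl, rfl⟩
      · rintro ⟨l, f, m⟩ hi
        exact card_level_le hN hM hAW hW hs hs1 f m (mem_range_succ_iff.1 (mem_product.1 hi).1) hp
    _ = (r + 1) * 2 ^ r * ∑ E ∈ D, (2 * (outDeg E W : ℝ) / N) ^ p := by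
      rw [← sum_fiberwise_of_maps_to' hmaps fun i => (2 * (i.2 : ℝ) / N) ^ p, sum_product]
      simp only [sum_const, card_range, nsmul_eq_mul, mul_sum]
      refine sum_congr rfl fun i _ => ?_
      push_cast
      ring

lemma card_inflow_le_le {r p : ℕ} (hN : 8 ≤ N) (hc : 0 < c) (hM : 2 * N ≤ M) (hMc : M ≤ c * N)
    (hAW : A ⊆ W) (hW : (#W : ℝ) ≤ s' * N) (hs : s' ≤ s / 4) (hs1 : s ≤ 1)
    (hW8 : 8 * #W ≤ N) (hp : p + r ≤ k1 * #A) (hp2 : p ≤ k2 * #A) :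
    (#{E ∈ dicores k1 k2 N M | IsTwoScaleTight (1 / 2) s s' E ∧ inflow E A W ≤ r} : ℝ) ≤
      (r + 1) * 2 ^ (r + 1) * (2 * tailStart k2 c 6 * #W / N) ^ p * #(dicores k1 k2 N M) := by
  set b := tailStart k2 c 6 with hb
  have hpb : p ≤ b * #W := hp2.trans (Nat.mul_le_mul (by simp only [hb, tailStart]; lia)
    (card_le_card hAW))
  calc (#{E ∈ dicores k1 k2 N M | IsTwoScaleTight (1 / 2) s s' E ∧ inflow E A W ≤ r} : ℝ)
    _ ≤ (r + 1) * 2 ^ r * ∑ E ∈ dicores k1 k2 N M, (2 * (outDeg E W : ℝ) / N) ^ p :=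
      card_inflow_le_le_sum (by lia) hM hAW hW hs hs1 hp
    _ = (r + 1) * 2 ^ r * ((2 / N) ^ p * ∑ E ∈ dicores k1 k2 N M, (outDeg E W : ℝ) ^ p) := by
      simp only [mul_div_right_comm, mul_pow, ← mul_sum]
    _ ≤ (r + 1) * 2 ^ r * ((2 / N) ^ p * (2 * (b * #W : ℝ) ^ p * #(dicores k1 k2 N M))) := by
      gcongr
      exact sum_outDeg_pow_le hN hc hMc hW8 hpb
    _ = (r + 1) * 2 ^ (r + 1) * (2 / N * (b * #W)) ^ p * #(dicores k1 k2 N M) := by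
      rw [mul_pow]
      ring
    _ = (r + 1) * 2 ^ (r + 1) * (2 * b * #W / N) ^ p * #(dicores k1 k2 N M) := by
      congr 3
      ring

end Level

/-! ### Small sets expand -/

section Separators

variable {N : ℕ}

lemma card_filter_card_lt_le (hN : 0 < N) (k : ℕ) :
    (#{T : Finset (Fin N) | #T < k} : ℝ) ≤ k * (N : ℝ) ^ (k - 1) := by
  have hsub : ({T : Finset (Fin N) | #T < k} : Finset _) ⊆
      (range k).biUnion fun i => powersetCard i univ := fun T hT => by simpa using hT
  calc (#{T : Finset (Fin N) | #T < k} : ℝ) ≤ ∑ i ∈ range k, (N.choose i : ℝ) := by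
        exact_mod_cast (card_le_card hsub).trans <| card_biUnion_le.trans_eq <| by
          simp only [card_powersetCard, card_univ, Fintype.card_fin]
    _ ≤ ∑ _i ∈ range k, (N : ℝ) ^ (k - 1) := sum_le_sum fun i hi => by
        exact_mod_cast (Nat.choose_le_pow N i).trans
          (Nat.pow_le_pow_right hN (Nat.le_sub_one_of_lt (mem_range.1 hi)))
    _ = k * (N : ℝ) ^ (k - 1) := by rw [sum_const, card_range, nsmul_eq_mul]

lemma sum_div_choose_card (w : ℕ → ℝ) :
    ∑ A : Finset (Fin N), w #A / N.choose #A = ∑ a ∈ range (N + 1), w a := by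
  rw [← powerset_univ, sum_powerset_apply_card (fun a => w a / N.choose a), card_univ,
    Fintype.card_fin]
  refine sum_congr rfl fun a ha => ?_
  have hchoose : (N.choose a : ℝ) ≠ 0 := by
    exact_mod_cast (Nat.choose_pos (mem_range_succ_iff.1 ha)).ne'
  rw [nsmul_eq_mul, mul_div_cancel₀ _ hchoose]

/-- `E` expands sets of between `b` and `d` vertices: even after the removal of fewer than `k`
vertices, each of them receives more than `r` edges from outside. -/
def Expands (k : ℕ) (b d : ℝ) (r : ℕ) (E : Finset (Fin N × Fin N)) : Prop :=
  ∀ T A : Finset (Fin N), #T < k → b ≤ #A → #A ≤ d → r < inflow E A (A ∪ T)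

lemma Expands.mono {k r : ℕ} {b d d' : ℝ} {E : Finset (Fin N × Fin N)} (h : Expands k b d' r E)
    (hd : d ≤ d') : Expands k b d r E :=
  fun T A hT hb hA => h T A hT hb (hA.trans hd)

lemma card_not_expands_le {k r : ℕ} {b d : ℝ} (hN : 0 < N)
    (D : Finset (Finset (Fin N × Fin N))) {P : Finset (Fin N × Fin N) → Prop} {w : ℕ → ℝ}
    (hw : ∀ a, 0 ≤ w a)
    (h : ∀ T A : Finset (Fin N), #T < k → b ≤ #A → #A ≤ d →
      (N.choose #A : ℝ) * #{E ∈ D | P E ∧ inflow E A (A ∪ T) ≤ r} ≤ w #A * #D) :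
    (#{E ∈ D | P E ∧ ¬ Expands k b d r E} : ℝ) ≤
      k * (N : ℝ) ^ (k - 1) * (∑ a ∈ range (N + 1), w a) * #D := by
  set separators : Finset (Finset (Fin N)) := {T | #T < k}
  set sets : Finset (Finset (Fin N)) := {A | b ≤ #A ∧ #A ≤ d}
  have hchoose (A : Finset (Fin N)) : (0 : ℝ) < N.choose #A := by
    exact_mod_cast Nat.choose_pos ((card_le_univ A).trans_eq (Fintype.card_fin N))
  have hsets : ∑ A ∈ sets, w #A * #D / N.choose #A ≤ (∑ a ∈ range (N + 1), w a) * #D := by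
    rw [sum_mul, ← sum_div_choose_card fun a => w a * #D]
    exact sum_le_univ_sum_of_nonneg fun A =>
      div_nonneg (mul_nonneg (hw _) (Nat.cast_nonneg _)) (hchoose A).le
  calc (#{E ∈ D | P E ∧ ¬ Expands k b d r E} : ℝ)
    _ ≤ ∑ i ∈ separators ×ˢ sets, w #i.2 * #D / N.choose #i.2 := by
      refine card_filter_le_sum D _
        (R := fun i E => P E ∧ inflow E i.2 (i.2 ∪ i.1) ≤ r) ?_ ?_
      · rintro E - ⟨hP, hE⟩
        simp only [Expands, not_forall, not_lt] at hE
        obtain ⟨T, A, hT, hb, hd, hr⟩ := hE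
        exact ⟨(T, A), mem_product.2 ⟨mem_filter.2 ⟨mem_univ T, hT⟩,
          mem_filter.2 ⟨mem_univ A, hb, hd⟩⟩, hP, hr⟩
      · rintro ⟨T, A⟩ hi
        obtain ⟨hT, hA⟩ := mem_product.1 hi
        rw [le_div_iff₀ (hchoose A), mul_comm]
        exact h T A (mem_filter.1 hT).2 (mem_filter.1 hA).2.1 (mem_filter.1 hA).2.2
    _ = #separators * ∑ A ∈ sets, w #A * #D / N.choose #A := by
      simp only [sum_product, sum_const, nsmul_eq_mul]
    _ ≤ k * (N : ℝ) ^ (k - 1) * ((∑ a ∈ range (N + 1), w a) * #D) := by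
      have := sum_nonneg fun a (_ : a ∈ range (N + 1)) => hw a
      exact mul_le_mul (card_filter_card_lt_le hN k) hsets
        (sum_nonneg fun A _ => div_nonneg (mul_nonneg (hw _) (Nat.cast_nonneg _)) (hchoose A).le)
        (by positivity)
    _ = k * (N : ℝ) ^ (k - 1) * (∑ a ∈ range (N + 1), w a) * #D := by ring

end Separators

section Estimates

variable {N k a r : ℕ} {B δ : ℝ}

lemma choose_le_three_mul_div_pow (N : ℕ) {a : ℕ} (ha : 0 < a) :
    (N.choose a : ℝ) ≤ (3 * N / a) ^ a := by
  have hexp : (a : ℝ) ^ a / a.factorial ≤ 3 ^ a :=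
    calc (a : ℝ) ^ a / a.factorial ≤ Real.exp a :=
          Real.pow_div_factorial_le_exp a (Nat.cast_nonneg _) a
      _ = Real.exp 1 ^ a := by rw [← Real.exp_nat_mul, mul_one]
      _ ≤ 3 ^ a := by
        gcongr
        linarith [Real.exp_one_lt_d9]
  calc (N.choose a : ℝ) ≤ (N : ℝ) ^ a / a.factorial := Nat.choose_le_pow_div a N
    _ = (a : ℝ) ^ a / a.factorial * (N / a) ^ a := by
      rw [div_pow]
      field_simp
    _ ≤ 3 ^ a * (N / a) ^ a := by gcongr
    _ = (3 * N / a) ^ a := by rw [← mul_pow, mul_div_assoc]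

lemma choose_mul_pow_le (hN : 0 < N) (hk : 0 < k) (ha : 0 < a) (hB : 0 ≤ B) :
    (N.choose a : ℝ) * (B * (a / N)) ^ (k * a) ≤ (3 * B ^ k * ((a : ℝ) / N) ^ (k - 1)) ^ a := by
  have hratio : (3 * N / a : ℝ) * (a / N) = 3 := by field_simp
  calc (N.choose a : ℝ) * (B * (a / N)) ^ (k * a)
    _ ≤ (3 * N / a) ^ a * (B * (a / N)) ^ (k * a) := by
      gcongr
      exact choose_le_three_mul_div_pow N ha
    _ = (3 * N / a * (a / N) * B ^ k * ((a : ℝ) / N) ^ (k - 1)) ^ a := by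
      rw [pow_mul, ← mul_pow, mul_pow B, ← mul_pow_sub_one hk.ne' ((a : ℝ) / N)]
      ring
    _ = (3 * B ^ k * ((a : ℝ) / N) ^ (k - 1)) ^ a := by rw [hratio]

lemma choose_mul_pow_le_of_two_le (hN : 0 < N) (hk : 2 ≤ k) (ha : 2 ≤ a) (hB : 0 ≤ B)
    (haN : (a : ℝ) ≤ δ * N) (hδ : δ ≤ 1) (hBδ : 3 * B ^ k * δ ≤ 1 / 2) :
    (N.choose a : ℝ) * (B * (a / N)) ^ (k * a) ≤
      4 * (3 * B ^ k) ^ 2 * ((a : ℝ) / N) ^ (2 * (k - 1)) * (1 / 2) ^ a := by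
  have haδ : (a : ℝ) / N ≤ δ := (div_le_iff₀ (by exact_mod_cast hN)).2 haN
  have hsmall : 3 * B ^ k * ((a : ℝ) / N) ^ (k - 1) ≤ 1 / 2 :=
    calc 3 * B ^ k * ((a : ℝ) / N) ^ (k - 1) ≤ 3 * B ^ k * ((a : ℝ) / N) ^ 1 := by
          gcongr 3 * B ^ k * ?_
          exact pow_le_pow_of_le_one (by positivity) (haδ.trans hδ) (by lia)
      _ ≤ 3 * B ^ k * δ := by rw [pow_one]; gcongr
      _ ≤ 1 / 2 := hBδ
  obtain ⟨b, rfl⟩ := Nat.exists_eq_add_of_le' ha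
  calc (N.choose (b + 2) : ℝ) * (B * ((b + 2 : ℕ) / N)) ^ (k * (b + 2))
    _ ≤ (3 * B ^ k * (((b + 2 : ℕ) : ℝ) / N) ^ (k - 1)) ^ (b + 2) :=
      choose_mul_pow_le hN (by lia) (by lia) hB
    _ ≤ (1 / 2) ^ b * (3 * B ^ k * (((b + 2 : ℕ) : ℝ) / N) ^ (k - 1)) ^ 2 := by
      rw [pow_add]
      gcongr
    _ = 4 * (3 * B ^ k) ^ 2 * (((b + 2 : ℕ) : ℝ) / N) ^ (2 * (k - 1)) * (1 / 2) ^ (b + 2) := by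
      rw [mul_pow (3 * B ^ k), ← pow_mul, mul_comm 2]
      ring

lemma choose_mul_two_pow_mul_pow_le (hN : 0 < N) (hk : 2 ≤ k) (ha : 0 < a) (hB : 1 ≤ B)
    (haN : (a : ℝ) ≤ δ * N) (hr : 2 * r ≤ a) (hBδ : (6 * B) ^ 2 * B * δ ≤ 1 / 4) :
    (N.choose a : ℝ) * (2 ^ r * (B * (a / N)) ^ (k * a - r)) ≤ (1 / 2) ^ a := by
  have haδ : (a : ℝ) / N ≤ δ := (div_le_iff₀ (by exact_mod_cast hN)).2 haN
  have hz : (6 * B) ^ 2 * (B * (a / N)) ≤ 1 / 4 :=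
    calc (6 * B) ^ 2 * (B * (a / N)) ≤ (6 * B) ^ 2 * (B * δ) := by gcongr
      _ ≤ 1 / 4 := by rwa [← mul_assoc]
  have hz₁ : B * (a / N) ≤ 1 := by
    have h6B : 1 ≤ (6 * B) ^ 2 := one_le_pow₀ (by linarith)
    nlinarith [show 0 ≤ B * ((a : ℝ) / N) by positivity]
  have hexp : a + (a - r) ≤ k * a - r := by
    have := Nat.mul_le_mul_right a hk
    lia
  have hchoose := choose_mul_pow_le (k := 1) hN one_pos ha (by linarith : 0 ≤ B)
  simp only [one_mul, pow_one, Nat.sub_self, pow_zero, mul_one] at hchoose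
  calc (N.choose a : ℝ) * (2 ^ r * (B * (a / N)) ^ (k * a - r))
    _ ≤ N.choose a * (2 ^ a * (B * (a / N)) ^ (a + (a - r))) := by
      gcongr ?_ * (?_ * ?_)
      · exact pow_le_pow_right₀ one_le_two (by lia)
      · exact pow_le_pow_of_le_one (by positivity) hz₁ hexp
    _ = 2 ^ a * (N.choose a * (B * (a / N)) ^ a) * (B * (a / N)) ^ (a - r) := by ring
    _ ≤ 2 ^ a * (3 * B) ^ a * (B * (a / N)) ^ (a - r) := by gcongr
    _ = (6 * B) ^ a * (B * (a / N)) ^ (a - r) := by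
      rw [← mul_pow]
      ring
    _ ≤ (6 * B) ^ (2 * (a - r)) * (B * (a / N)) ^ (a - r) := by
      gcongr
      · linarith
      · lia
    _ = ((6 * B) ^ 2 * (B * (a / N))) ^ (a - r) := by rw [pow_mul, ← mul_pow]
    _ ≤ (1 / 4) ^ (a - r) := by gcongr
    _ = (1 / 2) ^ (2 * (a - r)) := by
      rw [pow_mul]
      norm_num
    _ ≤ (1 / 2) ^ a := pow_le_pow_of_le_one (by norm_num) (by norm_num) (by lia)

lemma exists_sum_pow_mul_half_pow_le (j : ℕ) :
    ∃ C : ℝ, ∀ n : ℕ, ∑ a ∈ range n, (a : ℝ) ^ j * (1 / 2) ^ a ≤ C :=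
  ⟨∑' a : ℕ, (a : ℝ) ^ j * (1 / 2) ^ a, fun n =>
    (summable_pow_mul_geometric_of_norm_lt_one j (by norm_num)).sum_le_tsum (range n)
      fun a _ => by positivity⟩

end Estimates

section TwoScale

lemma Rare.of_and {k1 k2 c q : ℕ} {P Q : ∀ N : ℕ, Finset (Fin N × Fin N) → Prop}
    (hP : Rare k1 k2 c q fun N E => ¬ P N E) (hPQ : Rare k1 k2 c q fun N E => P N E ∧ Q N E) :
    Rare k1 k2 c q Q :=
  (hP.or hPQ).mono fun N _ E _ hQ => (em (P N E)).symm.imp_right fun h => ⟨h, hQ⟩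

lemma exists_rare_not_isTwoScaleTight (k1 k2 c q : ℕ) {κ : ℝ} (hκ : 0 < κ) :
    ∃ s s' : ℝ, 0 < s' ∧ s ≤ 1 / 2 ∧ s' ≤ s / 4 ∧
      Rare k1 k2 c q fun _ E => ¬ IsTwoScaleTight κ s s' E := by
  obtain ⟨s, hs, h⟩ := exists_rare_not_isTight k1 k2 c q hκ
  obtain ⟨t, ht₀, ht, hts⟩ : ∃ t : ℝ, 0 < t ∧ t ≤ 1 / 2 ∧ t ≤ s :=
    ⟨min (1 / 2) s, by positivity, min_le_left _ _, min_le_right _ _⟩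
  obtain ⟨s', hs', h'⟩ := exists_rare_not_isTight k1 k2 c q (κ := t / 4) (by positivity)
  refine ⟨t, min s' (t / 4), by positivity, ht, min_le_right _ _, (h.or h').mono ?_⟩
  intro N M E _ hE
  contrapose! hE
  exact ⟨hE.1.mono hts, hE.2.mono (min_le_left _ _)⟩

variable {k1 k2 c N M k : ℕ} {s s' : ℝ} {A T : Finset (Fin N)}

lemma card_inflow_union_le {r : ℕ} (hN : 8 ≤ N) (hNs : 2 * k ≤ s' * N) (hM : 2 * N ≤ M)
    (hMc : M ≤ c * N) (hk : 2 ≤ k) (hk1 : k ≤ k1) (hk2 : k ≤ k2) (hs : s' ≤ s / 4)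
    (hs1 : s ≤ 1 / 2) (hT : #T < k) (hA₀ : 0 < #A) (hA : (#A : ℝ) ≤ s' / 2 * N) (hr : r ≤ #A) :
    (#{E ∈ dicores k1 k2 N M | IsTwoScaleTight (1 / 2) s s' E ∧ inflow E A (A ∪ T) ≤ r} : ℝ) ≤
      (r + 1) * 2 ^ (r + 1) * (2 * tailStart k2 c 6 * k * (#A / N)) ^ (k * #A - r) *
        #(dicores k1 k2 N M) := by
  have hT' : (#T : ℝ) ≤ k := by exact_mod_cast hT.le
  have hunion : (#(A ∪ T) : ℝ) ≤ #A + #T := by exact_mod_cast card_union_le A T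
  have hW : (#(A ∪ T) : ℝ) ≤ s' * N := by linarith
  have hW8 : 8 * (#(A ∪ T) : ℝ) ≤ N := by nlinarith [(Nat.cast_nonneg N : (0 : ℝ) ≤ N)]
  have hWk : #(A ∪ T) ≤ k * #A := by
    have : #A + k ≤ k * #A + 1 := by nlinarith
    have := card_union_le A T
    lia
  have hk1A := Nat.mul_le_mul_right #A hk1
  have hk2A := Nat.mul_le_mul_right #A hk2
  have hkA := Nat.mul_le_mul_right #A hk
  refine (card_inflow_le_le hN (Nat.pos_of_mul_pos_right (by lia : 0 < c * N)) hM hMc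
    subset_union_left hW hs (by linarith) (by exact_mod_cast hW8)
    (by lia : k * #A - r + r ≤ k1 * #A) (by lia)).trans ?_
  have hWk' : (#(A ∪ T) : ℝ) ≤ k * #A := by exact_mod_cast hWk
  gcongr
  calc 2 * (tailStart k2 c 6 : ℝ) * #(A ∪ T) / N ≤ 2 * tailStart k2 c 6 * (k * #A) / N := by gcongr
    _ = 2 * tailStart k2 c 6 * k * (#A / N) := by ring

lemma exists_rare_not_and_card_inflow_union_le (k1 k2 c q : ℕ) (hk : 2 ≤ k) (hk1 : k ≤ k1)
    (hk2 : k ≤ k2) :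
    ∃ (G : ∀ N : ℕ, Finset (Fin N × Fin N) → Prop) (B t : ℝ) (N₀ : ℕ), 1 ≤ B ∧ 0 < t ∧
      Rare k1 k2 c q (fun N E => ¬ G N E) ∧
      ∀ {N M : ℕ}, N₀ ≤ N → 2 * N ≤ M → M ≤ c * N → ∀ {T A : Finset (Fin N)} {r : ℕ},
        #T < k → 0 < #A → (#A : ℝ) ≤ t * N → r ≤ #A →
        (#{E ∈ dicores k1 k2 N M | G N E ∧ inflow E A (A ∪ T) ≤ r} : ℝ) ≤
          (r + 1) * 2 ^ (r + 1) * (B * (#A / N)) ^ (k * #A - r) * #(dicores k1 k2 N M) := by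
  obtain ⟨s, s', hs', hs1, hs, hrare⟩ := exists_rare_not_isTwoScaleTight k1 k2 c q one_half_pos
  refine ⟨fun _ => IsTwoScaleTight (1 / 2) s s', 2 * tailStart k2 c 6 * k, s' / 2,
    max 8 ⌈2 * k / s'⌉₊, ?_, by positivity, hrare, ?_⟩
  · exact_mod_cast (Nat.mul_pos (Nat.mul_pos two_pos (by unfold tailStart; lia)) (by lia) :
      0 < 2 * tailStart k2 c 6 * k)
  · intro N M hN hM hMc T A r hT hA₀ hA hr
    have hNs : 2 * k ≤ s' * N := by
      rw [mul_comm s', ← div_le_iff₀ hs']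
      exact Nat.ceil_le.1 ((le_max_right _ _).trans hN)
    exact card_inflow_union_le ((le_max_left _ _).trans hN) hNs hM hMc hk hk1 hk2 hs hs1 hT hA₀
      hA hr

lemma exists_pos_le_and_mul_le {L t b : ℝ} (hL : 0 ≤ L) (ht : 0 < t) (hb : 0 < b) :
    ∃ δ : ℝ, 0 < δ ∧ δ ≤ t ∧ L * δ ≤ b := by
  obtain ⟨δ, hδ, hδb⟩ := exists_pos_mul_lt hb L
  exact ⟨min δ t, lt_min hδ ht, min_le_right _ _,
    (mul_le_mul_of_nonneg_left (min_le_left _ _) hL).trans hδb.le⟩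

lemma exists_rare_not_expands_two (k1 k2 c : ℕ) (hk : 2 ≤ k) (hk1 : k ≤ k1) (hk2 : k ≤ k2) :
    ∃ δ : ℝ, 0 < δ ∧ Rare k1 k2 c (k - 1) fun N E => ¬ Expands k 2 (δ * N) 0 E := by
  obtain ⟨G, B, t, N₀, hB, ht, hG, hinflow⟩ :=
    exists_rare_not_and_card_inflow_union_le k1 k2 c (k - 1) hk hk1 hk2
  obtain ⟨δ, hδ₀, hδt, hδB⟩ := exists_pos_le_and_mul_le (L := 3 * B ^ k) (b := 1 / 2)
    (by positivity) (lt_min one_pos ht) (by norm_num)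
  obtain ⟨C, hC⟩ := exists_sum_pow_mul_half_pow_le (2 * (k - 1))
  obtain ⟨L, hL⟩ : ∃ L : ℝ, L = 8 * (3 * B ^ k) ^ 2 := ⟨_, rfl⟩
  have hL₀ : 0 ≤ L := by rw [hL]; positivity
  refine ⟨δ, hδ₀, hG.of_and <| .of_forall_ge N₀ (fun N => k * (N : ℝ) ^ (k - 1) *
    ∑ a ∈ range (N + 1), L * ((a : ℝ) / N) ^ (2 * (k - 1)) * (1 / 2) ^ a) (k * (L * C)) ?_ ?_⟩
  · intro N hN
    calc k * (N : ℝ) ^ (k - 1) * (∑ a ∈ range (N + 1),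
          L * ((a : ℝ) / N) ^ (2 * (k - 1)) * (1 / 2) ^ a) * (N : ℝ) ^ (k - 1)
      _ = k * (L * ∑ a ∈ range (N + 1), (a : ℝ) ^ (2 * (k - 1)) * (1 / 2) ^ a) := by
        simp only [mul_sum, sum_mul, div_pow]
        refine sum_congr rfl fun a _ => ?_
        rw [two_mul, pow_add (N : ℝ)]
        field_simp
      _ ≤ k * (L * C) := by gcongr; exact hC _
  · intro N M hN₀ hN hM hMc
    refine card_not_expands_le hN _ (fun a => by positivity) fun T A hT h2A hA => ?_
    have h2A : 2 ≤ #A := by exact_mod_cast h2A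
    have hAt : (#A : ℝ) ≤ t * N := hA.trans (by gcongr; exact hδt.trans (min_le_right _ _))
    have hbound := hinflow hN₀ hM hMc hT (by lia) hAt (Nat.zero_le _)
    simp only [Nat.cast_zero, zero_add, one_mul, pow_one, Nat.sub_zero] at hbound
    calc (N.choose #A : ℝ) * #{E ∈ dicores k1 k2 N M | G N E ∧ inflow E A (A ∪ T) ≤ 0}
      _ ≤ N.choose #A * (2 * (B * (#A / N)) ^ (k * #A) * #(dicores k1 k2 N M)) := by gcongr
      _ = 2 * (N.choose #A * (B * (#A / N)) ^ (k * #A)) * #(dicores k1 k2 N M) := by ring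
      _ ≤ 2 * (4 * (3 * B ^ k) ^ 2 * (#A / N) ^ (2 * (k - 1)) * (1 / 2) ^ #A) *
          #(dicores k1 k2 N M) := by
        gcongr 2 * ?_ * _
        exact choose_mul_pow_le_of_two_le hN hk h2A (by linarith) hA
          (hδt.trans (min_le_left _ _)) hδB
      _ = L * (#A / N) ^ (2 * (k - 1)) * (1 / 2) ^ #A * #(dicores k1 k2 N M) := by
        rw [hL]
        ring

lemma mul_sum_mul_pow_mul_pow_le {N q : ℕ} {a β C : ℝ} (hN : 0 < N) (ha : 0 ≤ a) (hβ : 0 ≤ β)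
    (hC : (N : ℝ) ^ (2 * q + 2) * β ^ N ≤ C) :
    a * (N : ℝ) ^ q * (∑ _i ∈ range (N + 1), 4 * N * β ^ N) * (N : ℝ) ^ q ≤ a * (8 * C) := by
  have hN' : (N + 1 : ℝ) ≤ 2 * N := by exact_mod_cast (by lia : N + 1 ≤ 2 * N)
  calc a * (N : ℝ) ^ q * (∑ _i ∈ range (N + 1), 4 * N * β ^ N) * (N : ℝ) ^ q
    _ = a * (N : ℝ) ^ q * ((N + 1) * (4 * N * β ^ N)) * (N : ℝ) ^ q := by
      rw [sum_const, card_range, nsmul_eq_mul, Nat.cast_add_one]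
    _ ≤ a * (N : ℝ) ^ q * (2 * N * (4 * N * β ^ N)) * (N : ℝ) ^ q := by gcongr
    _ = a * (8 * ((N : ℝ) ^ (2 * q + 2) * β ^ N)) := by ring
    _ ≤ a * (8 * C) := by gcongr

lemma exists_rare_not_expands_linear (k1 k2 c : ℕ) (hk : 2 ≤ k) (hk1 : k ≤ k1) (hk2 : k ≤ k2) :
    ∃ δ : ℝ, 0 < δ ∧ ∀ η : ℝ, 0 < η →
      Rare k1 k2 c (k - 1) fun N E => ¬ Expands k (η * N) (δ * N) ⌊η / 2 * N⌋₊ E := by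
  obtain ⟨G, B, t, N₀, hB, ht, hG, hinflow⟩ :=
    exists_rare_not_and_card_inflow_union_le k1 k2 c (k - 1) hk hk1 hk2
  obtain ⟨δ, hδ₀, hδt, hδB⟩ := exists_pos_le_and_mul_le (L := (6 * B) ^ 2 * B) (b := 1 / 4)
    (by positivity) ht (by norm_num)
  refine ⟨δ, hδ₀, fun η hη => ?_⟩
  obtain ⟨β, hβ⟩ : ∃ β : ℝ, β = (1 / 2) ^ η := ⟨_, rfl⟩
  have hβ₀ : 0 ≤ β := by rw [hβ]; positivity
  have hβ₁ : β < 1 := by rw [hβ]; exact Real.rpow_lt_one (by norm_num) (by norm_num) hη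
  obtain ⟨C, hC⟩ := exists_pow_mul_pow_le (2 * (k - 1) + 2) hβ₀ hβ₁
  refine hG.of_and <| .of_forall_ge N₀ (fun N => k * (N : ℝ) ^ (k - 1) *
    ∑ _a ∈ range (N + 1), 4 * N * β ^ N) (k * (8 * C)) ?_ ?_
  · exact fun N hN => mul_sum_mul_pow_mul_pow_le hN k.cast_nonneg hβ₀ (hC N)
  · intro N M hN₀ hN hM hMc
    refine card_not_expands_le hN _ (fun _ => by positivity) fun T A hT hηA hA => ?_
    have hr : (⌊η / 2 * N⌋₊ : ℝ) ≤ η / 2 * N := Nat.floor_le (by positivity)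
    generalize ⌊η / 2 * N⌋₊ = r at hr ⊢
    have hrA : 2 * r ≤ #A := by exact_mod_cast (by linarith : (2 : ℝ) * r ≤ #A)
    have hA₀ : 0 < #A := by
      exact_mod_cast (mul_pos hη (by exact_mod_cast hN : (0 : ℝ) < N)).trans_le hηA
    have hAN : #A ≤ N := (card_le_univ A).trans_eq (Fintype.card_fin N)
    have hrN : (r + 1 : ℝ) ≤ 2 * N := by exact_mod_cast (by lia : r + 1 ≤ 2 * N)
    have hpow : (1 / 2 : ℝ) ^ #A ≤ β ^ N := by
      rw [hβ, ← Real.rpow_mul_natCast (by norm_num), ← Real.rpow_natCast]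
      exact Real.rpow_le_rpow_of_exponent_ge (by norm_num) (by norm_num) hηA
    calc (N.choose #A : ℝ) * #{E ∈ dicores k1 k2 N M | G N E ∧ inflow E A (A ∪ T) ≤ r}
      _ ≤ N.choose #A * ((r + 1) * 2 ^ (r + 1) * (B * (#A / N)) ^ (k * #A - r) *
          #(dicores k1 k2 N M)) := by
        gcongr
        exact hinflow hN₀ hM hMc hT hA₀ (hA.trans (by gcongr)) (by lia)
      _ = 2 * (r + 1) * (N.choose #A * (2 ^ r * (B * (#A / N)) ^ (k * #A - r))) *
          #(dicores k1 k2 N M) := by ring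
      _ ≤ 2 * (2 * N) * (1 / 2) ^ #A * #(dicores k1 k2 N M) := by
        gcongr
        exact choose_mul_two_pow_mul_pow_le hN hk hA₀ hB hA hrA hδB
      _ ≤ 2 * (2 * N) * β ^ N * #(dicores k1 k2 N M) := by gcongr
      _ = 4 * N * β ^ N * #(dicores k1 k2 N M) := by ring

end TwoScale

/-! ### Sets closed under predecessors -/

section PredClosed

variable {V : Type*} {T C C' : Finset V} {H H' : Finset (V × V)} {y : V}

/-- A set of vertices outside `T` that contains, for the edges `H`, all predecessors outside `T`
of its elements. -/
def PredClosed (T : Finset V) (H : Finset (V × V)) (C : Finset V) : Prop :=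
  Disjoint C T ∧ ∀ e ∈ H, e.2 ∈ C → e.1 ∉ T → e.1 ∈ C

/-- The vertices from which `y` can be reached by a path of edges in `H` avoiding `T`. -/
noncomputable def ancestors [Fintype V] (T : Finset V) (H : Finset (V × V)) (y : V) : Finset V :=
  {w | w ∉ T ∧ Relation.ReflTransGen (fun a b => a ∉ T ∧ b ∉ T ∧ (a, b) ∈ H) w y}

lemma PredClosed.mono (h : PredClosed T H C) (hH : H' ⊆ H) : PredClosed T H' C :=
  ⟨h.1, fun e he => h.2 e (hH he)⟩

lemma predClosed_empty : PredClosed T H ∅ :=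
  ⟨disjoint_empty_left _, fun _ _ h => absurd h (notMem_empty _)⟩

lemma PredClosed.union [DecidableEq V] (h : PredClosed T H C) (h' : PredClosed T H C') :
    PredClosed T H (C ∪ C') := by
  refine ⟨disjoint_union_left.2 ⟨h.1, h'.1⟩, fun e he hhead htail => ?_⟩
  exact mem_union.2 ((mem_union.1 hhead).imp (h.2 e he · htail) (h'.2 e he · htail))

lemma PredClosed.inflow_eq_zero [DecidableEq V] (h : PredClosed T H C) :
    inflow H C (C ∪ T) = 0 := by
  rw [inflow, card_eq_zero, filter_eq_empty_iff]
  rintro e he ⟨htail, hhead⟩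
  rw [mem_union, not_or] at htail
  exact htail.1 (h.2 e he hhead htail.2)

lemma card_filter_le_card_filter_sdiff_add [DecidableEq V] (E R : Finset (V × V))
    (p : V × V → Prop) [DecidablePred p] : #{e ∈ E | p e} ≤ #{e ∈ E \ R | p e} + #R :=
  (card_le_card fun e he => by
    simp only [mem_filter, mem_union, mem_sdiff] at he ⊢
    tauto).trans (card_union_le {e ∈ E \ R | p e} R)

section Ancestors

variable [Fintype V]

lemma predClosed_ancestors : PredClosed T H (ancestors T H y) := by
  refine ⟨disjoint_left.2 fun w hw => (mem_filter.1 hw).2.1, fun e he hhead htail => ?_⟩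
  simp only [ancestors, mem_filter, mem_univ, true_and] at hhead ⊢
  exact ⟨htail, .head ⟨htail, hhead.1, he⟩ hhead.2⟩

lemma self_mem_ancestors (hy : y ∉ T) : y ∈ ancestors T H y :=
  mem_filter.2 ⟨mem_univ _, hy, .refl⟩

lemma PredClosed.ancestors_subset (h : PredClosed T H C) (hy : y ∈ C) : ancestors T H y ⊆ C := by
  intro w hw
  obtain ⟨-, hwy⟩ := (mem_filter.1 hw).2
  induction hwy using Relation.ReflTransGen.head_induction_on with
  | refl => exact hy
  | head hstep _ ih =>
    exact h.2 _ hstep.2.2 (ih (mem_filter.2 ⟨mem_univ _, hstep.2.1, ‹_›⟩)) hstep.1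

/-- A largest closed subset with fewer than `b` vertices, together with the ancestors of a vertex
outside it, has at least `b` and hence more than `2 * b` vertices, so the ancestors alone
number at least `b`. -/
lemma exists_eq_ancestors {A : Finset V} {b : ℝ} (hb : 0 < b)
    (hA : PredClosed T H A) (hbA : b ≤ #A)
    (hmin : ∀ C ⊆ A, PredClosed T H C → b ≤ #C → C = A)
    (hgap : ∀ C, PredClosed T H C → b ≤ #C → 2 * b < #C) : ∃ y, A = ancestors T H y := by
  obtain ⟨U, hU, hUmax⟩ := exists_max_image
    {C ∈ A.powerset | PredClosed T H C ∧ (#C : ℝ) < b} card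
    ⟨∅, mem_filter.2 ⟨empty_mem_powerset A, predClosed_empty, by simpa using hb⟩⟩
  simp only [mem_filter, mem_powerset] at hU hUmax
  obtain ⟨hUA, hUclosed, hUb⟩ := hU
  obtain ⟨y, hyA, hyU⟩ : ∃ y ∈ A, y ∉ U := by
    by_contra! hAU
    have : (#A : ℝ) ≤ #U := by exact_mod_cast card_le_card hAU
    linarith
  have hy : y ∈ ancestors T H y := self_mem_ancestors (disjoint_left.1 hA.1 hyA)
  have hsub : ancestors T H y ⊆ A := hA.ancestors_subset hyA
  have hclosed : PredClosed T H (U ∪ ancestors T H y) := hUclosed.union predClosed_ancestors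
  have hunion : b ≤ #(U ∪ ancestors T H y) := by
    by_contra! hlt
    have hle := hUmax _ ⟨union_subset hUA hsub, hclosed, hlt⟩
    have hlt : #U < #(U ∪ ancestors T H y) :=
      card_lt_card ⟨subset_union_left, fun h => hyU (h (mem_union_right _ hy))⟩
    exact hlt.not_ge hle
  have hlarge : b ≤ #(ancestors T H y) := by
    have hgapU := hgap _ hclosed hunion
    have : (#(U ∪ ancestors T H y) : ℝ) ≤ #U + #(ancestors T H y) := by
      exact_mod_cast card_union_le _ _
    linarith
  exact ⟨y, (hmin _ hsub predClosed_ancestors hlarge).symm⟩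

end Ancestors

end PredClosed

/-! ### Cores of closed sets -/

section Core

variable {V : Type*} {T S : Finset V} {E : Finset (V × V)} {b : ℝ}

/-- A choice, for every `H ⊆ E`, of a minimal closed subset of `S` with at least `b` elements, such
that deleting edges whose heads lie outside `S` or equal a vertex `v` of the chosen set keeps `v`
in the chosen set. -/
structure IsCore (T S : Finset V) (E : Finset (V × V)) (b : ℝ)
    (core : Finset (V × V) → Finset V) : Prop where
  subset {H : Finset (V × V)} : H ⊆ E → core H ⊆ S
  predClosed {H : Finset (V × V)} : H ⊆ E → PredClosed T H (core H)
  le_card {H : Finset (V × V)} : H ⊆ E → b ≤ #(core H)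
  eq_of_subset {H : Finset (V × V)} {C : Finset V} :
    H ⊆ E → C ⊆ core H → PredClosed T H C → b ≤ #C → C = core H
  mem_of_subset {H H' : Finset (V × V)} {v : V} :
    H ⊆ E → H' ⊆ H → v ∈ core H → (∀ e ∈ H, e ∉ H' → e.2 ∈ S → e.2 = v) → v ∈ core H'

lemma exists_isCore [LinearOrder V] (hS : PredClosed T E S) (hb : b ≤ #S) :
    ∃ core, IsCore T S E b core := by
  -- Choosing the least set in a linear order that refines inclusion gives minimality, and makes
  -- the choices for `H` and `H'` comparable whenever each is closed for the other.
  have hex (H : Finset (V × V)) : ∃ C, H ⊆ E → (C ⊆ S ∧ PredClosed T H C ∧ b ≤ #C) ∧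
      ∀ C', C' ⊆ S → PredClosed T H C' → b ≤ #C' → toColex C ≤ toColex C' := by
    by_cases hH : H ⊆ E
    · obtain ⟨C, hC, hmin⟩ := exists_min_image {C ∈ S.powerset | PredClosed T H C ∧ b ≤ #C} toColex
        ⟨S, mem_filter.2 ⟨mem_powerset_self S, hS.mono hH, hb⟩⟩
      simp only [mem_filter, mem_powerset] at hC hmin
      exact ⟨C, fun _ => ⟨hC, fun C' h₁ h₂ h₃ => hmin C' ⟨h₁, h₂, h₃⟩⟩⟩
    · exact ⟨∅, fun h => absurd h hH⟩
  choose core hcore using hex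
  refine ⟨core, fun hH => (hcore _ hH).1.1, fun hH => (hcore _ hH).1.2.1,
    fun hH => (hcore _ hH).1.2.2, fun {H C} hH hC hclosed hbC => ?_,
    fun {H H' v} hH hH' hv hheads => ?_⟩
  · obtain ⟨⟨hsub, -, -⟩, hmin⟩ := hcore H hH
    exact toColex_inj.1 ((Colex.toColex_mono hC).antisymm (hmin C (hC.trans hsub) hclosed hbC))
  · by_contra hv'
    obtain ⟨⟨hsub, hclosed, hle⟩, hmin⟩ := hcore H hH
    obtain ⟨⟨hsub', hclosed', hle'⟩, hmin'⟩ := hcore H' (hH'.trans hH)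
    have hclosed'' : PredClosed T H (core H') := by
      refine ⟨hclosed'.1, fun e he hhead htail => ?_⟩
      by_cases heH' : e ∈ H'
      · exact hclosed'.2 e heH' hhead htail
      · exact absurd (hheads e he heH' (hsub' hhead) ▸ hhead) hv'
    have heq : core H = core H' := toColex_inj.1 <|
      (hmin _ hsub' hclosed'' hle').antisymm (hmin' _ hsub (hclosed.mono hH') hle)
    exact hv' (heq ▸ hv)

end Core

/-! ### Switching marked edges -/

section Marked

variable {k1 k2 N M r l : ℕ} {κ s s' τ : ℝ} {A B : Finset (Fin N × Fin N) → Finset (Fin N)}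

/-- The tight dicores `E` with a set `R` of `r` marked edges, such that at least `q` pairs of marked
edges consist of an edge into `A` and an edge out of `B`, and exactly `l` marked edges go from `B`
to `A`. The sets `A` and `B` may depend on the unmarked edges. -/
noncomputable def marked (k1 k2 M : ℕ) (κ s s' : ℝ) (A B : Finset (Fin N × Fin N) → Finset (Fin N))
    (q : ℝ) (r l : ℕ) : Finset (Σ _ : Finset (Fin N × Fin N), Finset (Fin N × Fin N)) :=
  {p ∈ ({E ∈ dicores k1 k2 N M | IsTwoScaleTight κ s s' E} : Finset _).sigma (powersetCard r) |
    q ≤ inDeg p.2 (A (p.1 \ p.2)) * outDeg p.2 (B (p.1 \ p.2)) ∧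
      #(edgesBetween p.2 (B (p.1 \ p.2)) (A (p.1 \ p.2))) = l}

/-- The exchanges of a marked edge into `A` from outside `B` with a marked edge from `B` to outside
`A`; each of them creates a marked edge from `B` to `A`. -/
noncomputable def markedMoves (A B : Finset (Fin N × Fin N) → Finset (Fin N))
    (p : Σ _ : Finset (Fin N × Fin N), Finset (Fin N × Fin N)) :
    Finset (Σ _ : Fin N × Fin N, Fin N × Fin N) :=
  ({e ∈ p.2 | e.1 ∉ B (p.1 \ p.2) ∧ e.2 ∈ A (p.1 \ p.2)} : Finset _).sigma fun e =>
    {f ∈ p.2 | f.1 ∈ B (p.1 \ p.2) ∧ f.2 ∉ A (p.1 \ p.2)} ∩ partners p.1 {e.1, e.2} e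

lemma mem_marked {q : ℝ} {E R : Finset (Fin N × Fin N)} :
    ⟨E, R⟩ ∈ marked k1 k2 M κ s s' A B q r l ↔
      ((IsDicore k1 k2 N M E ∧ IsTwoScaleTight κ s s' E) ∧ R ⊆ E ∧ #R = r) ∧
        q ≤ inDeg R (A (E \ R)) * outDeg R (B (E \ R)) ∧
          #(edgesBetween R (B (E \ R)) (A (E \ R))) = l := by
  simp only [marked, mem_filter, mem_sigma, mem_dicores, mem_powersetCard]

lemma card_marked_le (k1 k2 M : ℕ) (κ s s' : ℝ) (A B : Finset (Fin N × Fin N) → Finset (Fin N))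
    (q : ℝ) (r l : ℕ) :
    #(marked k1 k2 M κ s s' A B q r l) ≤ #(dicores k1 k2 N M) * M.choose r := by
  refine (card_filter_le _ _).trans ?_
  rw [card_sigma, ← smul_eq_mul, ← sum_const]
  refine (sum_le_sum_of_subset (filter_subset _ _)).trans_eq (sum_congr rfl fun E hE => ?_)
  rw [card_powersetCard, (mem_dicores.1 hE).1]

lemma card_edgesBetween_add_card_filter (R : Finset (Fin N × Fin N)) (W Z : Finset (Fin N)) :
    #(edgesBetween R W Z) + #{f ∈ R | f.1 ∈ W ∧ f.2 ∉ Z} = outDeg R W := by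
  rw [outDeg, ← card_filter_add_card_filter_not (s := {f ∈ R | f.1 ∈ W}) fun f => f.2 ∈ Z,
    filter_filter, filter_filter, edgesBetween]

lemma le_card_markedMoves {E R : Finset (Fin N × Fin N)} (hE : IsTwoScaleTight κ s s' E)
    (hR : R ⊆ E) (hs : s' ≤ s / 4) (hs' : 2 ≤ s' * N) :
    ((inDeg R (A (E \ R)) : ℝ) - #(edgesBetween R (B (E \ R)) (A (E \ R)))) *
        ((outDeg R (B (E \ R)) : ℝ) - #(edgesBetween R (B (E \ R)) (A (E \ R))) - 2 * κ * N) ≤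
      #(markedMoves A B ⟨E, R⟩) := by
  set crossing := edgesBetween R (B (E \ R)) (A (E \ R))
  set entering : Finset (Fin N × Fin N) := {e ∈ R | e.1 ∉ B (E \ R) ∧ e.2 ∈ A (E \ R)}
  set leaving : Finset (Fin N × Fin N) := {f ∈ R | f.1 ∈ B (E \ R) ∧ f.2 ∉ A (E \ R)}
  have hentering : (#crossing : ℝ) + #entering = inDeg R (A (E \ R)) := by
    exact_mod_cast card_edgesBetween_add_inflow R (B (E \ R)) (A (E \ R))
  have hleaving : (#crossing : ℝ) + #leaving = outDeg R (B (E \ R)) := by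
    exact_mod_cast card_edgesBetween_add_card_filter R (B (E \ R)) (A (E \ R))
  have hpartners (e : Fin N × Fin N) :
      (#leaving : ℝ) - 2 * κ * N ≤ #(leaving ∩ partners E {e.1, e.2} e) := by
    refine hE.card_sub_le_card_inter_partners ((filter_subset _ _).trans hR) (hs'.trans' ?_) hs
      (mem_insert_self _ _) (mem_insert_of_mem (mem_singleton_self _))
    exact_mod_cast card_le_two
  calc ((inDeg R (A (E \ R)) : ℝ) - #crossing) *
        ((outDeg R (B (E \ R)) : ℝ) - #crossing - 2 * κ * N)
    _ = ∑ _e ∈ entering, ((#leaving : ℝ) - 2 * κ * N) := by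
      rw [← hentering, ← hleaving, sum_const, nsmul_eq_mul, add_sub_cancel_left,
        add_sub_cancel_left]
    _ ≤ ∑ e ∈ entering, (#(leaving ∩ partners E {e.1, e.2} e) : ℝ) :=
      sum_le_sum fun e _ => hpartners e
    _ = #(markedMoves A B ⟨E, R⟩) := by
      rw [markedMoves, card_sigma, Nat.cast_sum]

lemma exchange_mem_marked {q : ℝ} {E R : Finset (Fin N × Fin N)} {u v x y : Fin N}
    (hp : ⟨E, R⟩ ∈ marked k1 k2 M κ s s' A B q r l)
    (hm : ⟨(u, v), (x, y)⟩ ∈ markedMoves A B ⟨E, R⟩) :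
    ⟨exchange E u v x y, exchange R u v x y⟩ ∈ marked k1 k2 M κ s s' A B q r (l + 1) := by
  obtain ⟨⟨⟨hdicore, htight⟩, hR, hcard⟩, hq, hl⟩ := mem_marked.1 hp
  simp only [markedMoves, mem_sigma, mem_inter, mem_filter] at hm
  obtain ⟨⟨huv, hu, hv⟩, ⟨hxy, hx, hy⟩, hg⟩ := hm
  have hE := exchangeable_of_mem_partners (hR huv) hg
  have hRex := hE.subset hR huv hxy
  obtain ⟨-, ⟨hxuv, -⟩, hyuv, -⟩ := mem_filter.1 hg
  simp only [mem_insert, mem_singleton, not_or] at hxuv hyuv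
  refine mem_marked.2 ?_
  rw [hE.exchange_sdiff_exchange hR huv hxy, hRex.card_exchange, hRex.inDeg_exchange,
    hRex.outDeg_exchange]
  refine ⟨⟨⟨hdicore.exchange hE hxuv.2 (Ne.symm hyuv.1), htight.exchange hE⟩,
    hE.exchange_subset_exchange hR huv hxy, hcard⟩, hq, ?_⟩
  have hcount := hRex.card_filter_exchange fun e => e.1 ∈ B (E \ R) ∧ e.2 ∈ A (E \ R)
  simp only [edgesBetween] at hl ⊢
  simpa only [hu, hv, hx, hy, hl, and_true, and_false, if_true, if_false, add_zero] using hcount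

lemma quarter_mul_sq_le_sub_mul_sub {p q r l w τ : ℝ} (hp : p ≤ r) (hq : q ≤ r) (hr : 0 < r)
    (hτ : 0 < τ) (hpq : τ * r ^ 2 ≤ p * q) (hp₀ : 0 ≤ p) (hl : l ≤ τ * r / 4)
    (hw : w ≤ τ * r / 4) : τ * r ^ 2 / 4 ≤ (p - l) * (q - l - w) := by
  have hτr : 0 < τ * r := mul_pos hτ hr
  have hτp : τ * r ≤ p := by
    by_contra! hlt
    nlinarith
  have hτq : τ * r ≤ q := by
    by_contra! hlt
    nlinarith
  calc τ * r ^ 2 / 4 ≤ (p - τ * r / 4) * (q - τ * r / 2) := by nlinarith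
    _ ≤ (p - l) * (q - l - w) := by
      refine mul_le_mul ?_ ?_ ?_ ?_ <;> linarith

lemma card_marked_mul_le (hs : s' ≤ s / 4) (hs' : 2 ≤ s' * N) (hr : 0 < r) (hτ : 0 < τ)
    (hκ : 2 * κ * N ≤ τ * r / 4) (hl : (l : ℝ) ≤ τ * r / 4) :
    (#(marked k1 k2 M κ s s' A B (τ * r ^ 2) r l) : ℝ) * (τ * r ^ 2 / 4) ≤
      #(marked k1 k2 M κ s s' A B (τ * r ^ 2) r (l + 1)) * ((l + 1) * r) := by
  refine card_mul_le_card_mul_of_moves (markedMoves A B)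
    (fun p => edgesBetween p.2 (B (p.1 \ p.2)) (A (p.1 \ p.2)) ×ˢ p.2)
    (fun p m => ⟨exchange p.1 m.1.1 m.1.2 m.2.1 m.2.2, exchange p.2 m.1.1 m.1.2 m.2.1 m.2.2⟩)
    (fun _ m => ((m.2.1, m.1.2), (m.1.1, m.2.2)))
    (fun p n => (⟨exchange p.1 n.1.1 n.1.2 n.2.1 n.2.2, exchange p.2 n.1.1 n.1.2 n.2.1 n.2.2⟩,
      ⟨(n.2.1, n.1.2), (n.1.1, n.2.2)⟩)) ?_ ?_ ?_ ?_
  · rintro ⟨E, R⟩ hp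
    obtain ⟨⟨⟨-, htight⟩, hR, rfl⟩, hq, rfl⟩ := mem_marked.1 hp
    have hin : (inDeg R (A (E \ R)) : ℝ) ≤ #R := by exact_mod_cast card_filter_le _ _
    have hout : (outDeg R (B (E \ R)) : ℝ) ≤ #R := by exact_mod_cast card_filter_le _ _
    exact (quarter_mul_sq_le_sub_mul_sub hin hout (by exact_mod_cast hr) hτ hq
      (Nat.cast_nonneg _) hl hκ).trans (le_card_markedMoves htight hR hs hs')
  · rintro ⟨E, R⟩ hp
    obtain ⟨⟨-, -, hcard⟩, -, hl'⟩ := mem_marked.1 hp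
    simp only [card_product, hl', hcard, Nat.cast_mul, Nat.cast_succ, le_refl]
  · rintro ⟨E, R⟩ hp ⟨⟨u, v⟩, ⟨x, y⟩⟩ hm
    refine ⟨exchange_mem_marked hp hm, ?_⟩
    obtain ⟨⟨-, hR, -⟩, -⟩ := mem_marked.1 hp
    simp only [markedMoves, mem_sigma, mem_inter, mem_filter] at hm
    obtain ⟨⟨huv, -, hv⟩, ⟨hxy, hx, -⟩, hg⟩ := hm
    have hE := exchangeable_of_mem_partners (hR huv) hg
    have hRsymm := (hE.subset hR huv hxy).symm
    rw [hE.exchange_sdiff_exchange hR huv hxy]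
    exact mem_product.2 ⟨mem_filter.2 ⟨hRsymm.mem_left, hx, hv⟩, hRsymm.mem_right⟩
  · rintro ⟨E, R⟩ hp ⟨⟨u, v⟩, ⟨x, y⟩⟩ hm
    obtain ⟨⟨-, hR, -⟩, -⟩ := mem_marked.1 hp
    simp only [markedMoves, mem_sigma, mem_inter, mem_filter] at hm
    obtain ⟨⟨huv, -⟩, ⟨hxy, -⟩, hg⟩ := hm
    have hE := exchangeable_of_mem_partners (hR huv) hg
    simp only [hE.exchange_exchange, (hE.subset hR huv hxy).exchange_exchange]

lemma two_pow_mul_card_marked_zero_le (hs : s' ≤ s / 4) (hs' : 2 ≤ s' * N) (hr : 0 < r)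
    (hτ : 0 < τ) (hκ : 2 * κ * N ≤ τ * r / 4) {t : ℕ} (ht : (t : ℝ) ≤ τ * r / 8) :
    2 ^ t * (#(marked k1 k2 M κ s s' A B (τ * r ^ 2) r 0) : ℝ) ≤
      #(marked k1 k2 M κ s s' A B (τ * r ^ 2) r t) := by
  induction t with
  | zero => simp
  | succ t ih =>
    rw [Nat.cast_succ] at ht
    have : (0 : ℝ) < r := by exact_mod_cast hr
    have hstep := card_marked_mul_le (k1 := k1) (k2 := k2) (M := M) (l := t) (A := A) (B := B)
      hs hs' hr hτ hκ (by linarith)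
    have hdouble : 2 * (#(marked k1 k2 M κ s s' A B (τ * r ^ 2) r t) : ℝ) ≤
        #(marked k1 k2 M κ s s' A B (τ * r ^ 2) r (t + 1)) := by
      refine le_of_mul_le_mul_right ?_ (by positivity : 0 < τ * r ^ 2 / 8)
      calc 2 * (#(marked k1 k2 M κ s s' A B (τ * r ^ 2) r t) : ℝ) * (τ * r ^ 2 / 8)
        _ = #(marked k1 k2 M κ s s' A B (τ * r ^ 2) r t) * (τ * r ^ 2 / 4) := by ring
        _ ≤ #(marked k1 k2 M κ s s' A B (τ * r ^ 2) r (t + 1)) * ((t + 1) * r) := hstep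
        _ ≤ #(marked k1 k2 M κ s s' A B (τ * r ^ 2) r (t + 1)) * (τ * r / 8 * r) := by gcongr
        _ = #(marked k1 k2 M κ s s' A B (τ * r ^ 2) r (t + 1)) * (τ * r ^ 2 / 8) := by ring
    calc 2 ^ (t + 1) * (#(marked k1 k2 M κ s s' A B (τ * r ^ 2) r 0) : ℝ)
      _ = 2 * (2 ^ t * #(marked k1 k2 M κ s s' A B (τ * r ^ 2) r 0)) := by ring
      _ ≤ 2 * #(marked k1 k2 M κ s s' A B (τ * r ^ 2) r t) := by
        gcongr; exact ih (by linarith)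
      _ ≤ #(marked k1 k2 M κ s s' A B (τ * r ^ 2) r (t + 1)) := hdouble

end Marked

/-! ### Marking edges at the cores of a cut -/

section Cut

variable {V : Type*} {T S S' : Finset V} {E R : Finset (V × V)} {e f : V × V} {b : ℝ}
  {core core' : Finset (V × V) → Finset V}

lemma PredClosed.head_notMem (hS : PredClosed T E S) (hS' : PredClosed T (rev E) S')
    (hdisj : Disjoint S S') (he : e ∈ E) (htail : e.1 ∈ S') : e.2 ∉ S := fun hhead =>
  disjoint_left.1 hdisj (hS.2 e he hhead (disjoint_left.1 hS'.1 htail)) htail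

variable [DecidableEq V]

lemma IsCore.mem_core_sdiff_insert (hcore : IsCore T S E b core) (he : e.2 ∈ core (E \ R))
    (hf : f.2 ∉ S) : e.2 ∈ core (E \ insert e (insert f R)) := by
  refine hcore.mem_of_subset sdiff_subset (sdiff_subset_sdiff Subset.rfl
    ((subset_insert _ _).trans (subset_insert _ _))) he fun g hg hg' hgS => ?_
  simp only [mem_sdiff, mem_insert, not_and, not_not] at hg hg'
  obtain rfl | rfl | hgR := hg' hg.1
  · rfl
  · exact absurd hgS hf
  · exact absurd hgR hg.2

lemma IsCore.mem_core_rev_sdiff_insert (hcore : IsCore T S (rev E) b core)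
    (hf : f.1 ∈ core (rev (E \ R))) (he : e.1 ∉ S) :
    f.1 ∈ core (rev (E \ insert e (insert f R))) := by
  rw [rev_sdiff] at hf
  have hmem := hcore.mem_core_sdiff_insert (e := f.swap) (f := e.swap) hf he
  have hrev : rev (insert e (insert f R)) = insert f.swap (insert e.swap (rev R)) := by
    rw [insert_comm]
    simp only [rev, map_insert]
    rfl
  rwa [rev_sdiff, hrev]

lemma IsCore.le_inDeg_sdiff (hcore : IsCore T S E b core) (hin : ∀ Z, 2 * #Z ≤ inDeg E Z)
    (hR : #R ≤ b) : b ≤ inDeg (E \ R) (core (E \ R)) := by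
  have hdeg : 2 * (#(core (E \ R)) : ℝ) ≤ inDeg E (core (E \ R)) := by exact_mod_cast hin _
  have hsdiff : (inDeg E (core (E \ R)) : ℝ) ≤ inDeg (E \ R) (core (E \ R)) + #R := by
    exact_mod_cast card_filter_le_card_filter_sdiff_add E R fun e => e.2 ∈ core (E \ R)
  linarith [hcore.le_card (sdiff_subset (s := E) (t := R))]

lemma IsCore.le_outDeg_sdiff (hcore : IsCore T S (rev E) b core)
    (hout : ∀ Z, 2 * #Z ≤ outDeg E Z) (hR : #R ≤ b) :
    b ≤ outDeg (E \ R) (core (rev (E \ R))) := by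
  rw [← inDeg_rev, rev_sdiff]
  exact hcore.le_inDeg_sdiff (fun Z => by rw [inDeg_rev]; exact hout Z) (by rwa [card_rev])

/-- Marking one more edge into the first core and one more edge out of the second changes neither
endpoint's membership in its core, since no edge runs from `S'` to `S`. -/
lemma IsCore.choose_mul_sq_le_sum {r : ℕ} (hcore : IsCore T S E b core)
    (hcore' : IsCore T S' (rev E) b core') (hcut : ∀ e ∈ E, e.1 ∈ S' → e.2 ∉ S)
    (hin : ∀ Z, 2 * #Z ≤ inDeg E Z) (hout : ∀ Z, 2 * #Z ≤ outDeg E Z) (hb : 0 ≤ b) (hr : r ≤ b) :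
    (#E).choose r * b ^ 2 ≤ ∑ R ∈ powersetCard (r + 2) E,
      (inDeg R (core (E \ R)) * outDeg R (core' (rev (E \ R))) : ℝ) := by
  have hnotMem {R : Finset (V × V)} {e f : V × V} (he : e ∈ E ∧ e ∉ R) (heA : e.2 ∈ core (E \ R))
      (hf : f.1 ∈ core' (rev (E \ R))) : e ∉ insert f R := by
    rw [mem_insert, not_or]
    refine ⟨?_, he.2⟩
    rintro rfl
    exact hcut e he.1 (hcore'.subset (rev_mono sdiff_subset) hf) (hcore.subset sdiff_subset heA)
  have hmoves := card_mul_le_card_mul_of_moves (X := powersetCard r E)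
    (Y := (powersetCard (r + 2) E).sigma fun R =>
      {e ∈ R | e.2 ∈ core (E \ R)} ×ˢ {f ∈ R | f.1 ∈ core' (rev (E \ R))})
    (fun R => {e ∈ E \ R | e.2 ∈ core (E \ R)} ×ˢ {f ∈ E \ R | f.1 ∈ core' (rev (E \ R))})
    (fun _ => {()}) (fun R m => ⟨insert m.1 (insert m.2 R), m⟩) (fun _ _ => ())
    (fun p _ => ((p.1.erase p.2.1).erase p.2.2, p.2)) (a := b ^ 2) (b := 1) ?_ (by simp) ?_ ?_
  · rw [card_powersetCard, mul_one, card_sigma, Nat.cast_sum] at hmoves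
    simpa only [card_product, Nat.cast_mul, inDeg, outDeg] using hmoves
  · intro R hR
    rw [(mem_powersetCard.1 hR).2.symm] at hr
    rw [card_product, Nat.cast_mul, sq]
    exact mul_le_mul (hcore.le_inDeg_sdiff hin hr) (hcore'.le_outDeg_sdiff hout hr) hb
      (Nat.cast_nonneg _)
  · rintro R hR ⟨e, f⟩ hm
    obtain ⟨hRE, hRcard⟩ := mem_powersetCard.1 hR
    simp only [mem_product, mem_filter, mem_sdiff] at hm
    obtain ⟨⟨he, heA⟩, ⟨hfE, hfR⟩, hfB⟩ := hm
    have heS := hcore.subset sdiff_subset heA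
    have hfS' := hcore'.subset (rev_mono sdiff_subset) hfB
    simp only [mem_sigma, mem_powersetCard, mem_product, mem_filter, mem_singleton, and_true]
    refine ⟨⟨insert_subset he.1 (insert_subset hfE hRE), ?_⟩, ⟨mem_insert_self _ _, ?_⟩,
      mem_insert_of_mem (mem_insert_self _ _), ?_⟩
    · rw [card_insert_of_notMem (hnotMem he heA hfB), card_insert_of_notMem hfR, hRcard]
    · exact hcore.mem_core_sdiff_insert heA (hcut f hfE hfS')
    · exact hcore'.mem_core_rev_sdiff_insert hfB fun heS' => hcut e he.1 heS' heS
  · rintro R - ⟨e, f⟩ hm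
    simp only [mem_product, mem_filter, mem_sdiff] at hm
    obtain ⟨⟨he, heA⟩, ⟨-, hfR⟩, hfB⟩ := hm
    simp only [erase_insert (hnotMem he heA hfB), erase_insert hfR]

lemma choose_mul_le (M r : ℕ) :
    M.choose (r + 2) * ((r + 2) * (r + 1)) ≤ M.choose r * M ^ 2 := by
  calc M.choose (r + 2) * ((r + 2) * (r + 1))
    _ = M.choose (r + 1) * (r + 1) * (M - (r + 1)) := by
      rw [← mul_assoc, Nat.choose_succ_right_eq M (r + 1), mul_right_comm]
    _ = M.choose r * ((M - r) * (M - (r + 1))) := by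
      rw [Nat.choose_succ_right_eq, mul_assoc]
    _ ≤ M.choose r * M ^ 2 := by
      rw [sq]
      gcongr <;> exact Nat.sub_le _ _

lemma mul_card_le_card_filter_of_le_sum {α : Type*} {X : Finset α} {g : α → ℝ} {a K : ℝ}
    (hK : 0 < K) (ha : 0 ≤ a) (hg : ∀ x ∈ X, g x ≤ K) (hsum : 2 * a * K * #X ≤ ∑ x ∈ X, g x) :
    a * #X ≤ #{x ∈ X | a * K ≤ g x} := by
  have hsplit : ∑ x ∈ X, g x ≤ ∑ x ∈ X, (a * K + if a * K ≤ g x then K else 0) := by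
    refine sum_le_sum fun x hx => ?_
    have : 0 ≤ a * K := by positivity
    split_ifs with hlarge
    · linarith [hg x hx]
    · linarith
  rw [sum_add_distrib, ← sum_filter, sum_const, sum_const, nsmul_eq_mul, nsmul_eq_mul] at hsplit
  refine le_of_mul_le_mul_right ?_ hK
  linarith

lemma IsCore.mul_choose_le_card_filter {τ : ℝ} {r : ℕ} (hcore : IsCore T S E b core)
    (hcore' : IsCore T S' (rev E) b core') (hcut : ∀ e ∈ E, e.1 ∈ S' → e.2 ∉ S)
    (hin : ∀ Z, 2 * #Z ≤ inDeg E Z) (hout : ∀ Z, 2 * #Z ≤ outDeg E Z) (hb : 0 ≤ b) (hr : r ≤ b)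
    (hr₂ : 2 ≤ r) (hτ : 0 ≤ τ) (hτb : 4 * τ * #E ^ 2 ≤ b ^ 2) :
    τ * (#E).choose r ≤ #{R ∈ powersetCard r E |
      τ * r ^ 2 ≤ (inDeg R (core (E \ R)) * outDeg R (core' (rev (E \ R))) : ℝ)} := by
  obtain ⟨n, rfl⟩ := Nat.exists_eq_add_of_le' hr₂
  have hn : (n : ℝ) ≤ b := (by exact_mod_cast Nat.le_add_right n 2 : (n : ℝ) ≤ _).trans hr
  rw [← card_powersetCard]
  refine mul_card_le_card_filter_of_le_sum (by positivity) hτ (fun R hR => ?_) ?_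
  · rw [← (mem_powersetCard.1 hR).2, sq]
    gcongr <;> exact card_filter_le _ _
  · have hchoose : ((#E).choose (n + 2) * ((n + 2) * (n + 1)) : ℝ) ≤ (#E).choose n * #E ^ 2 := by
      exact_mod_cast choose_mul_le #E n
    calc 2 * τ * ((n + 2 : ℕ) : ℝ) ^ 2 * #(powersetCard (n + 2) E)
      _ = 4 * τ * ((#E).choose (n + 2) * ((n + 2) * ((n + 2) / 2))) := by
        rw [card_powersetCard]; push_cast; ring
      _ ≤ 4 * τ * ((#E).choose (n + 2) * ((n + 2) * (n + 1))) := by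
        gcongr; linarith [(Nat.cast_nonneg n : (0 : ℝ) ≤ n)]
      _ ≤ 4 * τ * ((#E).choose n * #E ^ 2) := by gcongr
      _ = (#E).choose n * (4 * τ * #E ^ 2) := by ring
      _ ≤ (#E).choose n * b ^ 2 := by gcongr
      _ ≤ _ := hcore.choose_mul_sq_le_sum hcore' hcut hin hout hb hn

end Cut

/-! ### Large cuts are rare -/

section LargeCut

/-- After removal of the vertices in `T`, the vertices are separated into two sets of size at least
`b` with no edge from the second to the first; these may omit some vertices. -/
def LargeCut {V : Type*} (b : ℝ) (T : Finset V) (E : Finset (V × V)) : Prop :=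
  ∃ S S', PredClosed T E S ∧ PredClosed T (rev E) S' ∧ Disjoint S S' ∧ b ≤ #S ∧ b ≤ #S'

variable {k k1 k2 c N M r t : ℕ} {s s' κ τ b η : ℝ} {T S : Finset (Fin N)}
  {E R : Finset (Fin N × Fin N)} {core : Finset (Fin N × Fin N) → Finset (Fin N)}

lemma IsCore.exists_eq_ancestors (hcore : IsCore T S E b core) (hb : 0 < b)
    (hE : Expands k b (2 * b) r E) (hT : #T < k) (hR : #R ≤ r) :
    ∃ y, core (E \ R) = ancestors T (E \ R) y := by
  refine Dicore.exists_eq_ancestors hb (hcore.predClosed sdiff_subset) (hcore.le_card sdiff_subset)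
    (fun C hC hclosed hbC => hcore.eq_of_subset sdiff_subset hC hclosed hbC)
    fun C hclosed hbC => ?_
  by_contra! hC
  have hinflow : inflow E C (C ∪ T) ≤ inflow (E \ R) C (C ∪ T) + #R :=
    card_filter_le_card_filter_sdiff_add E R _
  rw [hclosed.inflow_eq_zero] at hinflow
  have := hE T C hT hbC hC
  lia

lemma LargeCut.mul_choose_le_card_filter (hcut : LargeCut b T E)
    (hin : ∀ Z, 2 * #Z ≤ inDeg E Z) (hout : ∀ Z, 2 * #Z ≤ outDeg E Z) (hb : 0 < b) (hr : r ≤ b)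
    (hr₂ : 2 ≤ r) (hτ : 0 ≤ τ) (hτb : 4 * τ * #E ^ 2 ≤ b ^ 2) (hT : #T < k)
    (hexp : Expands k b (2 * b) r E) (hexp' : Expands k b (2 * b) r (rev E)) :
    τ * (#E).choose r ≤ #{R ∈ powersetCard r E | ∃ y z,
      τ * r ^ 2 ≤ (inDeg R (ancestors T (E \ R) y) * outDeg R (ancestors T (rev (E \ R)) z) : ℝ) ∧
        #(edgesBetween R (ancestors T (rev (E \ R)) z) (ancestors T (E \ R) y)) = 0} := by
  obtain ⟨S, S', hS, hS', hdisj, hSb, hSb'⟩ := hcut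
  have hcut : ∀ e ∈ E, e.1 ∈ S' → e.2 ∉ S := fun e => hS.head_notMem hS' hdisj
  obtain ⟨core, hcore⟩ := exists_isCore hS hSb
  obtain ⟨core', hcore'⟩ := exists_isCore hS' hSb'
  refine (hcore.mul_choose_le_card_filter hcore' hcut hin hout hb.le hr hr₂ hτ hτb).trans ?_
  refine Nat.cast_le.2 (card_le_card fun R hR => ?_)
  simp only [mem_filter] at hR ⊢
  obtain ⟨hR, hpairs⟩ := hR
  obtain ⟨hRE, hRr⟩ := mem_powersetCard.1 hR
  obtain ⟨y, hy⟩ := hcore.exists_eq_ancestors hb hexp hT hRr.le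
  obtain ⟨z, hz⟩ := hcore'.exists_eq_ancestors (R := rev R) hb hexp' hT (by rw [card_rev, hRr])
  rw [← rev_sdiff] at hz
  refine ⟨hR, y, z, hy ▸ hz ▸ hpairs, ?_⟩
  rw [← hy, ← hz, card_eq_zero, edgesBetween, filter_eq_empty_iff]
  rintro e he ⟨htail, hhead⟩
  exact hcut e (hRE he) (hcore'.subset (rev_mono sdiff_subset) htail)
    (hcore.subset sdiff_subset hhead)

lemma card_biUnion_marked_le (hs : s' ≤ s / 4) (hs' : 2 ≤ s' * N) (hr : 0 < r) (hτ : 0 < τ)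
    (hκ : 2 * κ * N ≤ τ * r / 4) (ht : (t : ℝ) ≤ τ * r / 8)
    (A B : Fin N → Finset (Fin N × Fin N) → Finset (Fin N)) :
    (#((univ : Finset (Fin N × Fin N)).biUnion fun p =>
        marked k1 k2 M κ s s' (A p.1) (B p.2) (τ * r ^ 2) r 0) : ℝ) * 2 ^ t ≤
      N ^ 2 * (#(dicores k1 k2 N M) * M.choose r) := by
  calc (#((univ : Finset (Fin N × Fin N)).biUnion fun p =>
        marked k1 k2 M κ s s' (A p.1) (B p.2) (τ * r ^ 2) r 0) : ℝ) * 2 ^ t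
    _ ≤ (∑ p : Fin N × Fin N,
        (#(marked k1 k2 M κ s s' (A p.1) (B p.2) (τ * r ^ 2) r 0) : ℝ)) * 2 ^ t := by
      gcongr
      exact_mod_cast card_biUnion_le
    _ ≤ ∑ _p : Fin N × Fin N, (#(dicores k1 k2 N M) * M.choose r : ℝ) := by
      rw [sum_mul]
      refine sum_le_sum fun p _ => ?_
      rw [mul_comm]
      exact (two_pow_mul_card_marked_zero_le hs hs' hr hτ hκ ht).trans
        ((Nat.cast_le.2 (card_marked_le ..)).trans_eq (Nat.cast_mul _ _))
    _ = N ^ 2 * (#(dicores k1 k2 N M) * M.choose r) := by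
      rw [sum_const, card_univ, Fintype.card_prod, Fintype.card_fin, nsmul_eq_mul, Nat.cast_mul, sq]

lemma card_largeCut_mul_le (hk1 : 2 ≤ k1) (hk2 : 2 ≤ k2) (hs : s' ≤ s / 4) (hs' : 2 ≤ s' * N)
    (hτ : 0 < τ) (hκ : 2 * κ * N ≤ τ * r / 4) (ht : (t : ℝ) ≤ τ * r / 8) (hb : 0 < b)
    (hr : r ≤ b) (hr₂ : 2 ≤ r) (hrM : r ≤ M) (hτb : 4 * τ * M ^ 2 ≤ b ^ 2) (hT : #T < k) :
    (#{E ∈ dicores k1 k2 N M | IsTwoScaleTight κ s s' E ∧ Expands k b (2 * b) r E ∧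
        Expands k b (2 * b) r (rev E) ∧ LargeCut b T E} : ℝ) * (τ * 2 ^ t) ≤
      N ^ 2 * #(dicores k1 k2 N M) := by
  have hmark := card_mul_le_card_mul_of_moves
    (X := {E ∈ dicores k1 k2 N M | IsTwoScaleTight κ s s' E ∧ Expands k b (2 * b) r E ∧
      Expands k b (2 * b) r (rev E) ∧ LargeCut b T E})
    (Y := (univ : Finset (Fin N × Fin N)).biUnion fun p => marked k1 k2 M κ s s'
      (fun H => ancestors T H p.1) (fun H => ancestors T (rev H) p.2) (τ * r ^ 2) r 0)
    (fun E => {R ∈ powersetCard r E | ∃ y z,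
      τ * r ^ 2 ≤ (inDeg R (ancestors T (E \ R) y) * outDeg R (ancestors T (rev (E \ R)) z) : ℝ) ∧
        #(edgesBetween R (ancestors T (rev (E \ R)) z) (ancestors T (E \ R) y)) = 0})
    (fun _ => {()}) (fun E R => ⟨E, R⟩) (fun _ _ => ()) (fun p _ => (p.1, p.2))
    (a := τ * M.choose r) (b := 1) ?_ (by simp) ?_ (fun _ _ _ _ => rfl)
  · have hchoose : (0 : ℝ) < M.choose r := by exact_mod_cast Nat.choose_pos hrM
    have hmarked := card_biUnion_marked_le (k1 := k1) (k2 := k2) (M := M) hs hs' (by lia) hτ hκ ht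
      (fun y H => ancestors T H y) (fun z H => ancestors T (rev H) z)
    refine le_of_mul_le_mul_right ?_ hchoose
    rw [mul_one] at hmark
    linarith [mul_le_mul_of_nonneg_right hmark (by positivity : (0 : ℝ) ≤ 2 ^ t)]
  · intro E hE
    obtain ⟨hED, -, hexp, hexp', hcut⟩ := mem_filter.1 hE
    have hdicore := mem_dicores.1 hED
    obtain rfl := hdicore.1
    refine hcut.mul_choose_le_card_filter (fun Z => ?_) (fun Z => ?_) hb hr hr₂ hτ.le hτb hT
      hexp hexp'
    · exact (Nat.mul_le_mul_right _ hk1).trans (hdicore.mul_card_le_inDeg Z)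
    · rw [← inDeg_rev]
      exact (Nat.mul_le_mul_right _ hk2).trans (hdicore.rev.mul_card_le_inDeg Z)
  · intro E hE R hR
    obtain ⟨hED, htight, -⟩ := mem_filter.1 hE
    obtain ⟨hR, y, z, hyz⟩ := mem_filter.1 hR
    exact ⟨mem_biUnion.2 ⟨(y, z), mem_univ _,
      mem_marked.2 ⟨⟨⟨mem_dicores.1 hED, htight⟩, mem_powersetCard.1 hR⟩, hyz⟩⟩,
      mem_singleton_self _⟩

lemma one_le_two_mul_rpow_mul_two_pow {a : ℝ} {n t : ℕ} (h : a * n - 1 ≤ t) :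
    1 ≤ 2 * ((2 : ℝ) ^ (-a)) ^ n * 2 ^ t := by
  calc (1 : ℝ) ≤ 2 ^ (1 + -a * n + t) := Real.one_le_rpow one_le_two (by linarith)
    _ = 2 * ((2 : ℝ) ^ (-a)) ^ n * 2 ^ t := by
      rw [Real.rpow_add two_pos, Real.rpow_add two_pos, Real.rpow_one,
        Real.rpow_mul_natCast two_pos.le, Real.rpow_natCast]

lemma card_linear_largeCut_mul_le (hk1 : 2 ≤ k1) (hk2 : 2 ≤ k2) (hs : s' ≤ s / 4)
    (hs' : 2 ≤ s' * N) (hτ : 0 < τ) (hη : 0 < η) (hη₁ : η ≤ 1) (hτη : 4 * τ * c ^ 2 ≤ η ^ 2)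
    (hηN : 8 ≤ η * N) (hM : 2 * N ≤ M) (hMc : M ≤ c * N) (hT : #T < k) :
    (#{E ∈ dicores k1 k2 N M | IsTwoScaleTight (τ * η / 64) s s' E ∧
        Expands k (η * N) (2 * (η * N)) ⌊η / 2 * N⌋₊ E ∧
        Expands k (η * N) (2 * (η * N)) ⌊η / 2 * N⌋₊ (rev E) ∧ LargeCut (η * N) T E} : ℝ) * τ ≤
      2 * N ^ 2 * ((2 : ℝ) ^ (-(τ * η / 32))) ^ N * #(dicores k1 k2 N M) := by
  have hr : (⌊η / 2 * N⌋₊ : ℝ) ≤ η / 2 * N := Nat.floor_le (by positivity)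
  have hr' : η / 4 * N ≤ ⌊η / 2 * N⌋₊ := by linarith [Nat.lt_floor_add_one (η / 2 * N)]
  generalize ⌊η / 2 * N⌋₊ = r at hr hr' ⊢
  have hτr : τ * (η / 4 * N) ≤ τ * r := by gcongr
  have ht : (⌊τ * r / 8⌋₊ : ℝ) ≤ τ * r / 8 := Nat.floor_le (by positivity)
  have ht' : τ * η / 32 * N - 1 ≤ ⌊τ * r / 8⌋₊ := by
    linarith [Nat.lt_floor_add_one (τ * r / 8)]
  have hr₂ : 2 ≤ r := by exact_mod_cast (by linarith : (2 : ℝ) ≤ r)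
  have hrM : r ≤ M := by
    have hrN : r ≤ N := by
      exact_mod_cast (by nlinarith [(Nat.cast_nonneg N : (0 : ℝ) ≤ N)] : (r : ℝ) ≤ N)
    lia
  have hτM : 4 * τ * M ^ 2 ≤ (η * N) ^ 2 :=
    calc 4 * τ * (M : ℝ) ^ 2 ≤ 4 * τ * (c * N) ^ 2 := by gcongr; exact_mod_cast hMc
      _ = 4 * τ * c ^ 2 * N ^ 2 := by ring
      _ ≤ η ^ 2 * N ^ 2 := by gcongr
      _ = (η * N) ^ 2 := by ring
  have hcard := card_largeCut_mul_le (t := ⌊τ * r / 8⌋₊) (κ := τ * η / 64) (b := η * N) (T := T)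
    hk1 hk2 hs hs' hτ (by linarith) ht (by linarith) (by linarith) hr₂ hrM hτM hT
  obtain ⟨x, hx⟩ : ∃ x : ℝ, x = #{E ∈ dicores k1 k2 N M | IsTwoScaleTight (τ * η / 64) s s' E ∧
    Expands k (η * N) (2 * (η * N)) r E ∧ Expands k (η * N) (2 * (η * N)) r (rev E) ∧
    LargeCut (η * N) T E} := ⟨_, rfl⟩
  rw [← hx] at hcard ⊢
  have hx₀ : 0 ≤ x := hx ▸ Nat.cast_nonneg _
  obtain ⟨β, hβ⟩ : ∃ β : ℝ, β = (2 : ℝ) ^ (-(τ * η / 32)) := ⟨_, rfl⟩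
  have hβt : 1 ≤ 2 * β ^ N * 2 ^ ⌊τ * r / 8⌋₊ := hβ ▸ one_le_two_mul_rpow_mul_two_pow ht'
  have hβ₀ : 0 ≤ β := by rw [hβ]; positivity
  rw [← hβ]
  calc x * τ ≤ x * τ * (2 * β ^ N * 2 ^ ⌊τ * r / 8⌋₊) := le_mul_of_one_le_right (by positivity) hβt
    _ = 2 * β ^ N * (x * (τ * 2 ^ ⌊τ * r / 8⌋₊)) := by ring
    _ ≤ 2 * β ^ N * (N ^ 2 * #(dicores k1 k2 N M)) := by gcongr
    _ = 2 * N ^ 2 * β ^ N * #(dicores k1 k2 N M) := by ring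

lemma rare_largeCut (k c q : ℕ) (hk1 : 2 ≤ k1) (hk2 : 2 ≤ k2) (hη : 0 < η) (hη₁ : η ≤ 1) :
    Rare k1 k2 c q fun N E => Expands k (η * N) (2 * (η * N)) ⌊η / 2 * N⌋₊ E ∧
      Expands k (η * N) (2 * (η * N)) ⌊η / 2 * N⌋₊ (rev E) ∧
      ∃ T, #T < k ∧ LargeCut (η * N) T E := by
  obtain ⟨τ, hτ, hτη⟩ : ∃ τ : ℝ, 0 < τ ∧ 4 * (c : ℝ) ^ 2 * τ ≤ η ^ 2 := by
    obtain ⟨τ, hτ, -, hτη⟩ := exists_pos_le_and_mul_le (L := 4 * (c : ℝ) ^ 2) (b := η ^ 2)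
      (by positivity) one_pos (by positivity)
    exact ⟨τ, hτ, hτη⟩
  obtain ⟨s, s', hs', -, hs, htight⟩ :=
    exists_rare_not_isTwoScaleTight k1 k2 c q (κ := τ * η / 64) (by positivity)
  obtain ⟨β, hβ⟩ : ∃ β : ℝ, β = (2 : ℝ) ^ (-(τ * η / 32)) := ⟨_, rfl⟩
  have hβ₀ : 0 ≤ β := by rw [hβ]; positivity
  have hβ₁ : β < 1 := by
    rw [hβ]
    exact Real.rpow_lt_one_of_one_lt_of_neg one_lt_two (neg_neg_of_pos (by positivity))
  obtain ⟨C, hC⟩ := exists_pow_mul_pow_le (k - 1 + 2 + q) hβ₀ hβ₁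
  obtain ⟨N₀, hN₀⟩ := exists_nat_ge (max (8 / η) (2 / s'))
  refine htight.of_and <| .of_forall_ge N₀
    (fun N => k * (N : ℝ) ^ (k - 1) * (2 * N ^ 2 * β ^ N / τ)) (2 * k / τ * C) ?_ ?_
  · intro N _
    calc k * (N : ℝ) ^ (k - 1) * (2 * N ^ 2 * β ^ N / τ) * (N : ℝ) ^ q
      _ = 2 * k / τ * ((N : ℝ) ^ (k - 1 + 2 + q) * β ^ N) := by ring
      _ ≤ 2 * k / τ * C := by gcongr; exact hC N
  · intro N M hN hN₁ hM hMc
    have hN' := hN₀.trans (Nat.cast_le.2 hN)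
    rw [max_le_iff, div_le_iff₀' hη, div_le_iff₀' hs'] at hN'
    refine (card_filter_le_sum _ {T : Finset (Fin N) | #T < k}
      (R := fun T E => IsTwoScaleTight (τ * η / 64) s s' E ∧
        Expands k (η * N) (2 * (η * N)) ⌊η / 2 * N⌋₊ E ∧
        Expands k (η * N) (2 * (η * N)) ⌊η / 2 * N⌋₊ (rev E) ∧ LargeCut (η * N) T E)
      (f := fun _ => 2 * N ^ 2 * β ^ N / τ * #(dicores k1 k2 N M)) ?_ fun T hT => ?_).trans ?_
    · rintro E - ⟨htight, hexp, hexp', T, hT, hcut⟩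
      exact ⟨T, mem_filter.2 ⟨mem_univ _, hT⟩, htight, hexp, hexp', hcut⟩
    · rw [div_mul_eq_mul_div _ τ, le_div_iff₀ hτ, hβ]
      exact card_linear_largeCut_mul_le hk1 hk2 hs hN'.2 hτ hη hη₁ (by linarith) hN'.1 hM hMc
        (mem_filter.1 hT).2
    · rw [sum_const, nsmul_eq_mul, ← mul_assoc]
      gcongr
      exact card_filter_card_lt_le hN₁ k

end LargeCut

/-! ### Dicores that are not strongly connected are rare -/

section NotConnected

variable {k k1 k2 N M : ℕ} {T S : Finset (Fin N)} {E : Finset (Fin N × Fin N)} {δ : ℝ}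

lemma PredClosed.two_le_card (hS : PredClosed T E S) (hE : IsDicore k1 k2 N M E) (hT : #T < k1)
    (hSne : S.Nonempty) : 2 ≤ #S := by
  by_contra! hcard
  obtain ⟨v, rfl⟩ := card_eq_one.1 (le_antisymm (Nat.lt_succ_iff.1 hcard) hSne.card_pos)
  have hle : #{e ∈ E | e.2 = v} ≤ #T := by
    refine card_le_card_of_injOn Prod.fst (fun e he => ?_) fun e he f hf htail => ?_
    · obtain ⟨heE, hev⟩ := mem_filter.1 he
      by_contra heT
      have hloop := mem_singleton.1 (hS.2 e heE (mem_singleton.2 hev) heT)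
      exact hE.2.1 e heE (hloop.trans hev.symm)
    · exact Prod.ext htail ((mem_filter.1 he).2.trans (mem_filter.1 hf).2.symm)
  have := (hE.2.2 v).1
  lia

lemma PredClosed.compl {V : Type*} [Fintype V] [DecidableEq V] {T S : Finset V}
    {E : Finset (V × V)} (hS : PredClosed T E S) : PredClosed T (rev E) ((univ \ T) \ S) := by
  refine ⟨disjoint_left.2 fun w hw => ?_, fun e he hhead htail => ?_⟩
  · exact (mem_sdiff.1 (mem_sdiff.1 hw).1).2
  · simp only [mem_sdiff, mem_univ, true_and] at hhead ⊢
    exact ⟨htail, fun htailS => hhead.2 (hS.2 e.swap (mem_rev.1 he) htailS hhead.1)⟩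

lemma PredClosed.lt_card_of_expands (hS : PredClosed T E S) (hE : IsDicore k1 k2 N M E)
    (hT : #T < k) (hk : k ≤ k1) (hSne : S.Nonempty) (hexp : Expands k 2 (δ * N) 0 E) :
    δ * N < #S := by
  by_contra! hcard
  have hinflow := hexp T S hT (by exact_mod_cast hS.two_le_card hE (hT.trans_le hk) hSne) hcard
  exact hinflow.ne' hS.inflow_eq_zero

lemma _root_.IsDicore.exists_largeCut (hE : IsDicore k1 k2 N M E) (hkN : k < N) (hk1 : k ≤ k1)
    (hk2 : k ≤ k2) (hexp : Expands k 2 (δ * N) 0 E) (hexp' : Expands k 2 (δ * N) 0 (rev E))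
    (hnot : ¬ KStronglyConnected k E) : ∃ T : Finset (Fin N), #T < k ∧ LargeCut (δ * N) T E := by
  simp only [KStronglyConnected, hkN, true_and] at hnot
  push Not at hnot
  obtain ⟨T, hT, u, v, hu, hv, hpath⟩ := hnot
  have hS : PredClosed T E (ancestors T E v) := predClosed_ancestors
  have hu' : u ∈ (univ \ T) \ ancestors T E v := by
    simp [ancestors, hu, hpath]
  refine ⟨T, hT, _, _, hS, hS.compl, disjoint_sdiff, ?_, ?_⟩
  · exact (hS.lt_card_of_expands hE hT hk1 ⟨v, self_mem_ancestors hv⟩ hexp).le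
  · exact (hS.compl.lt_card_of_expands hE.rev hT hk2 ⟨u, hu'⟩ hexp').le

lemma exists_rare_not_expands (k1 k2 c : ℕ) (hk : 2 ≤ k) (hk1 : k ≤ k1) (hk2 : k ≤ k2) :
    ∃ δ : ℝ, 0 < δ ∧ ∀ η : ℝ, 0 < η → Rare k1 k2 c (k - 1) fun N E =>
      ¬ (Expands k 2 (δ * N) 0 E ∧ Expands k (η * N) (δ * N) ⌊η / 2 * N⌋₊ E) := by
  obtain ⟨δ, hδ, htwo⟩ := exists_rare_not_expands_two k1 k2 c hk hk1 hk2
  obtain ⟨δ', hδ', hlinear⟩ := exists_rare_not_expands_linear k1 k2 c hk hk1 hk2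
  refine ⟨min δ δ', lt_min hδ hδ', fun η hη => (htwo.or (hlinear η hη)).mono fun N M E _ h => ?_⟩
  contrapose! h
  exact ⟨h.1.mono (by gcongr; exact min_le_left _ _), h.2.mono (by gcongr; exact min_le_right _ _)⟩

lemma rare_not_kStronglyConnected (c : ℕ) (hk1 : 2 ≤ k1) (hk2 : 2 ≤ k2) :
    Rare k1 k2 c (min k1 k2 - 1) fun _ E => ¬ KStronglyConnected (min k1 k2) E := by
  obtain ⟨k, hk⟩ : ∃ k, k = min k1 k2 := ⟨_, rfl⟩
  obtain ⟨δ₁, hδ₁, hin⟩ := exists_rare_not_expands (k := k) k1 k2 c (by lia) (by lia) (by lia)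
  obtain ⟨δ₂, hδ₂, hout⟩ := exists_rare_not_expands (k := k) k2 k1 c (by lia) (by lia) (by lia)
  obtain ⟨η, hη, hη₁, hηδ₁, hηδ₂⟩ : ∃ η : ℝ, 0 < η ∧ η ≤ 1 ∧ 2 * η ≤ δ₁ ∧ 2 * η ≤ δ₂ :=
    ⟨min (1 / 2) (min (δ₁ / 2) (δ₂ / 2)), by positivity,
      (min_le_left _ _).trans (by norm_num),
      by linarith [min_le_right (1 / 2) (min (δ₁ / 2) (δ₂ / 2)), min_le_left (δ₁ / 2) (δ₂ / 2)],
      by linarith [min_le_right (1 / 2) (min (δ₁ / 2) (δ₂ / 2)), min_le_right (δ₁ / 2) (δ₂ / 2)]⟩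
  have hsmall : Rare k1 k2 c (k - 1) fun N _ => N ≤ k :=
    .of_forall_ge (k + 1) (fun _ => 0) 0 (fun _ _ => by simp) fun N M hN _ _ _ => by
      simp [Nat.not_le.2 hN]
  rw [← hk]
  refine (((hin η hη).or (hout η hη).reverse).or
    ((rare_largeCut k c (k - 1) hk1 hk2 hη hη₁).or hsmall)).mono fun N M E hE hnot => ?_
  by_contra! h
  obtain ⟨⟨⟨hin₂, hin⟩, hout₂, hout⟩, hlarge, hkN⟩ := h
  have hδ₁N : 2 * (η * N) ≤ δ₁ * N := by rw [← mul_assoc]; gcongr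
  have hδ₂N : 2 * (η * N) ≤ δ₂ * N := by rw [← mul_assoc]; gcongr
  have hηN : η * N ≤ 2 * (η * N) := by linarith [show 0 ≤ η * N by positivity]
  obtain ⟨T, hT, hcut⟩ := hE.exists_largeCut hkN (by lia) (by lia)
    (hin₂.mono (hηN.trans hδ₁N)) (hout₂.mono (hηN.trans hδ₂N)) hnot
  exact hlarge (hin.mono hδ₁N) (hout.mono hδ₂N) T hT hcut

end NotConnected

end Dicore

open Finset in
theorem k_strongly_connected_dicore_count_general {k1 k2 : ℕ} (hk1 : 2 ≤ k1) (hk2 : 2 ≤ k2)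
    (C1 : ℝ) :
    ∃ C : ℝ, 0 < C ∧ ∀ N M : ℕ, 0 < N → (M : ℝ) ≤ C1 * N →
      (Nat.card {E : Finset (Fin N × Fin N) //
          IsDicore k1 k2 N M E ∧ ¬ KStronglyConnected (min k1 k2) E} : ℝ) ≤
        C * (Nat.card {E : Finset (Fin N × Fin N) // IsDicore k1 k2 N M E} : ℝ) /
          (N : ℝ) ^ (min k1 k2 - 1) := by
  obtain ⟨C, hC, hrare⟩ := Dicore.rare_not_kStronglyConnected ⌈C1⌉₊ hk1 hk2
  refine ⟨C, hC, fun N M hN hM => ?_⟩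
  rw [Dicore.natCard_isDicore_and, Dicore.natCard_isDicore, le_div_iff₀ (by positivity)]
  by_cases hNM : 2 * N ≤ M
  · refine hrare N M hN hNM ?_
    exact_mod_cast hM.trans (mul_le_mul_of_nonneg_right (Nat.le_ceil C1) N.cast_nonneg)
  · have hempty : Dicore.dicores k1 k2 N M = ∅ := eq_empty_of_forall_notMem fun E hE =>
      hNM ((Nat.mul_le_mul_right N hk1).trans (Dicore.mem_dicores.1 hE).mul_le)
    simp [hempty]

theorem k_strongly_connected_dicore_count
    (k1 k2 : ℕ) (hk1 : 2 ≤ k1) (hk2 : 2 ≤ k2) (ε C1 : ℝ) (hε : 0 < ε)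
    (hC1 : ((max k1 k2 : ℕ) : ℝ) + ε < C1) :
    ∃ C : ℝ, 0 < C ∧ ∀ N M : ℕ, 0 < N → 0 < M →
      (((max k1 k2 : ℕ) : ℝ) + ε) * N ≤ M → (M : ℝ) ≤ C1 * N →
      (Nat.card {E : Finset (Fin N × Fin N) //
          IsDicore k1 k2 N M E ∧ ¬ KStronglyConnected (min k1 k2) E} : ℝ) ≤
        C * (Nat.card {E : Finset (Fin N × Fin N) // IsDicore k1 k2 N M E} : ℝ) /
          (N : ℝ) ^ (min k1 k2 - 1) := by
  obtain ⟨C, hC, hbound⟩ := k_strongly_connected_dicore_count_general hk1 hk2 C1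
  exact ⟨C, hC, fun N M hN _ _ hM => hbound N M hN hM⟩
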